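/- (Concentration–compactness, mass-at-infinity part.) Let N ≥ 3, α ∈ (0, N), p ≥ (N+α)/(N−2), and let {u_n} be uniformly bounded in D^{1,2}(G). Then, after passing to a subsequence converging pointwise to some u ∈ D^{1,2}(G), the limits L(r) := lim_{n→∞} ∑_{d(x,e)>r} |∇u_n(x)|₂² and M(r) := lim_{n→∞} ∑_{d(x,e)>r} (R_α ∗ |u_n|^p)(x)|u_n(x)|^p exist for every r ≥ 1, and setting μ_∞ := lim_{r→∞} L(r) and ν_∞ := lim_{r→∞} M(r), one has: ν_∞ ≤ K·μ_∞^p; lim_{n→∞} ‖u_n‖_{D^{1,2}}² = ‖u‖_{D^{1,2}}² + μ_∞; and lim_{n→∞} ∑_{x∈G} (R_α ∗ |u_n|^p)(x)|u_n(x)|^p = ∑_{x∈G} (R_α ∗ |u|^p)(x)|u(x)|^p + ν_∞. -/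

import Mathlib

open Filter Topology

noncomputable section

namespace Choquard

variable {G : Type*}

/-- The word metric on the Cayley graph of `(G, S)`: the least `k` such that
`y = x * s₁ * ⋯ * s_k` with each `sᵢ ∈ S`. -/
def wordDist [Group G] (S : Finset G) (x y : G) : ℕ :=
  sInf {k : ℕ | ∃ l : List G, (∀ s ∈ l, s ∈ S) ∧ l.length = k ∧ y = x * l.prod}

/-- Convolution against a kernel: `(R ∗ f)(x) = ∑_{y ∈ G} R(x,y) f(y)`. -/
def conv (R : G → G → ℝ) (f : G → ℝ) (x : G) : ℝ := ∑' y, R x y * f y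

/-- The `ℓ^q(G)` norm of `u`. -/
def lpNorm (q : ℝ) (u : G → ℝ) : ℝ := (∑' x, |u x| ^ q) ^ (1 / q)

/-- `u ∈ ℓ^q(G)`. -/
def Memlp (q : ℝ) (u : G → ℝ) : Prop := Summable fun x : G => |u x| ^ q

/-- `|∇u(x)|_p^p = ∑_{y ∼ x} |u(y) − u(x)|^p`, where `y ∼ x` iff `y = x * s`, `s ∈ S`. -/
def gradP [Group G] (S : Finset G) (p : ℝ) (u : G → ℝ) (x : G) : ℝ :=
  ∑ s ∈ S, |u (x * s) - u x| ^ p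

/-- The `D^{1,p}` norm `(∑_x ∑_{y ∼ x} |u(y) − u(x)|^p)^{1/p}`. -/
def D1Norm [Group G] (S : Finset G) (p : ℝ) (u : G → ℝ) : ℝ :=
  (∑' x, gradP S p u x) ^ (1 / p)

/-- `u ∈ D^{1,p}(G) = {u ∈ ℓ^{Np/(N−p)}(G) : ‖u‖_{D^{1,p}} < ∞}`. -/
def MemD1p [Group G] (S : Finset G) (N : ℕ) (p : ℝ) (u : G → ℝ) : Prop :=
  Memlp ((N : ℝ) * p / ((N : ℝ) - p)) u ∧ Summable (gradP S p u)

/-- `|∇u(x)|₂² = ∑_{y ∼ x} (u(y) − u(x))²`. -/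
def gradSq [Group G] (S : Finset G) (u : G → ℝ) (x : G) : ℝ :=
  ∑ s ∈ S, (u (x * s) - u x) ^ 2

/-- The `D^{1,2}` norm. -/
def D12Norm [Group G] (S : Finset G) (u : G → ℝ) : ℝ :=
  (∑' x, gradSq S u x) ^ ((1 : ℝ) / 2)

/-- `u ∈ D^{1,2}(G) = {u ∈ ℓ^{2N/(N−2)}(G) : ‖u‖_{D^{1,2}} < ∞}`. -/
def MemD12 [Group G] (S : Finset G) (N : ℕ) (u : G → ℝ) : Prop :=
  Memlp (2 * (N : ℝ) / ((N : ℝ) - 2)) u ∧ Summable (gradSq S u)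

/-- The graph Laplacian `Δu(x) = ∑_{y ∼ x} (u(y) − u(x))`. -/
def lap [Group G] (S : Finset G) (u : G → ℝ) (x : G) : ℝ :=
  ∑ s ∈ S, (u (x * s) - u x)

/-- `u ∈ D^{2,2}(G) = {u ∈ ℓ^{2N/(N−4)}(G) : ‖Δu‖_{ℓ²} < ∞}`. -/
def MemD22 [Group G] (S : Finset G) (N : ℕ) (u : G → ℝ) : Prop :=
  Memlp (2 * (N : ℝ) / ((N : ℝ) - 4)) u ∧ Summable fun x => (lap S u x) ^ 2

/-- `u ∈ D^{2,p}(G) = {u ∈ ℓ^{Np/(N−2p)}(G) : ‖Δu‖_{ℓ^p} < ∞}`. -/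
def MemD2p [Group G] (S : Finset G) (N : ℕ) (p : ℝ) (u : G → ℝ) : Prop :=
  Memlp ((N : ℝ) * p / ((N : ℝ) - 2 * p)) u ∧ Summable fun x => |lap S u x| ^ p

/-- The nonlocal energy `∑_{x ∈ G} (R_α ∗ |u|^p)(x) |u(x)|^p`. -/
def energy (R : G → G → ℝ) (p : ℝ) (u : G → ℝ) : ℝ :=
  ∑' x, conv R (fun y => |u y| ^ p) x * |u x| ^ p

/-- The optimal constant `K` of the Sobolev-type inequality. -/
def bestK [Group G] (S : Finset G) (N : ℕ) (R : G → G → ℝ) (p : ℝ) : ℝ :=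
  sSup {t : ℝ | ∃ u : G → ℝ, MemD12 S N u ∧ D12Norm S u = 1 ∧ t = energy R p u}

/-- The discrete `p`-Laplacian. -/
def pLap [Group G] (S : Finset G) (p : ℝ) (u : G → ℝ) (x : G) : ℝ :=
  ∑ s ∈ S, |u (x * s) - u x| ^ (p - 2) * (u (x * s) - u x)

/-- The cutoff `Ψ_r`, the indicator of `{x : d(x,e) ≥ r + 1}`. -/
def cutoff [Group G] (S : Finset G) (r : ℕ) (x : G) : ℝ :=
  if r + 1 ≤ wordDist S 1 x then 1 else 0

/-! ### Helper material -/

/-- Geometric hypotheses. -/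
structure Geo [Group G] (S : Finset G) (N : ℕ) (C₁ C₂ : ℝ) : Prop where
  gen : Subgroup.closure (S : Set G) = ⊤
  sym : ∀ s ∈ S, s⁻¹ ∈ S
  hN : 3 ≤ N
  hC₁ : 0 < C₁
  hC₂ : 0 < C₂
  growth : ∀ n : ℕ, 1 ≤ n →
      C₁ * (n : ℝ) ^ N ≤ (Nat.card {x : G // wordDist S 1 x ≤ n} : ℝ) ∧
      (Nat.card {x : G // wordDist S 1 x ≤ n} : ℝ) ≤ C₂ * (n : ℝ) ^ N

lemma wordDist_eq [Group G] (S : Finset G) (x y : G) :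
    wordDist S x y = wordDist S 1 (x⁻¹ * y) := by
  unfold wordDist
  congr 1
  ext k
  constructor
  · rintro ⟨l, h1, h2, h3⟩
    exact ⟨l, h1, h2, by rw [h3]; group⟩
  · rintro ⟨l, h1, h2, h3⟩
    refine ⟨l, h1, h2, ?_⟩
    rw [one_mul] at h3
    rw [← h3]; group

lemma Geo.exists_list [Group G] {S : Finset G} {N : ℕ} {C₁ C₂ : ℝ} (H : Geo S N C₁ C₂) (g : G) :
    ∃ l : List G, (∀ s ∈ l, s ∈ S) ∧ l.length = wordDist S 1 g ∧ g = l.prod := by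
  have hne : {k : ℕ | ∃ l : List G, (∀ s ∈ l, s ∈ S) ∧ l.length = k ∧ g = 1 * l.prod}.Nonempty := by
    have hg : g ∈ Subgroup.closure (S : Set G) := by rw [H.gen]; trivial
    rw [← Subgroup.mem_toSubmonoid, Subgroup.closure_toSubmonoid] at hg
    obtain ⟨l, hl, hp⟩ := Submonoid.exists_list_of_mem_closure hg
    refine ⟨l.length, l, ?_, rfl, by rw [hp, one_mul]⟩
    intro s hs
    rcases hl s hs with h | h
    · exact_mod_cast h
    · have := H.sym _ (by exact_mod_cast h : s⁻¹ ∈ S)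
      rwa [inv_inv] at this
  obtain ⟨l, h1, h2, h3⟩ := Nat.sInf_mem hne
  exact ⟨l, h1, h2, by rw [h3, one_mul]⟩

lemma wordDist_le [Group G] (S : Finset G) (l : List G) (hl : ∀ s ∈ l, s ∈ S) :
    wordDist S 1 l.prod ≤ l.length :=
  Nat.sInf_le ⟨l, hl, rfl, by rw [one_mul]⟩

lemma Geo.mul_le [Group G] {S : Finset G} {N : ℕ} {C₁ C₂ : ℝ} (H : Geo S N C₁ C₂) (x s : G)
    (hs : s ∈ S) : wordDist S 1 (x * s) ≤ wordDist S 1 x + 1 := by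
  obtain ⟨l, h1, h2, h3⟩ := H.exists_list x
  have := wordDist_le S (l ++ [s]) (by
    intro t ht
    rcases List.mem_append.1 ht with h | h
    · exact h1 t h
    · rw [List.mem_singleton.1 h]; exact hs)
  simp only [List.prod_append, List.prod_singleton, List.length_append, List.length_singleton,
    ← h3, h2] at this
  exact this

lemma Geo.le_mul [Group G] {S : Finset G} {N : ℕ} {C₁ C₂ : ℝ} (H : Geo S N C₁ C₂) (x s : G)
    (hs : s ∈ S) : wordDist S 1 x ≤ wordDist S 1 (x * s) + 1 := by
  have := H.mul_le (x * s) s⁻¹ (H.sym s hs)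
  simpa using this

lemma Geo.eq_one [Group G] {S : Finset G} {N : ℕ} {C₁ C₂ : ℝ} (H : Geo S N C₁ C₂) (x : G)
    (hx : wordDist S 1 x = 0) : x = 1 := by
  obtain ⟨l, h1, h2, h3⟩ := H.exists_list x
  rw [hx, List.length_eq_zero_iff] at h2
  rw [h3, h2, List.prod_nil]

lemma Geo.ball_finite [Group G] {S : Finset G} {N : ℕ} {C₁ C₂ : ℝ} (H : Geo S N C₁ C₂) (n : ℕ) :
    {x : G | wordDist S 1 x ≤ n}.Finite := by
  have key : {x : G | wordDist S 1 x ≤ n + 1}.Finite := by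
    have h := (H.growth (n + 1) (by omega)).1
    have hpos : 0 < C₁ * ((n + 1 : ℕ) : ℝ) ^ N := by
      have := H.hC₁
      positivity
    have h2 : 0 < Nat.card {x : G // wordDist S 1 x ≤ n + 1} := by
      have := hpos.trans_le h
      exact_mod_cast this
    have := (Nat.card_pos_iff.1 h2).2
    exact Set.finite_coe_iff.1 this
  exact key.subset (fun x hx => by simp only [Set.mem_ofPred_eq] at *; omega)

/-- The ball as a finset. -/
def Geo.ball [Group G] {S : Finset G} {N : ℕ} {C₁ C₂ : ℝ} (H : Geo S N C₁ C₂) (n : ℕ) : Finset G :=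
  (H.ball_finite n).toFinset

lemma Geo.mem_ball [Group G] {S : Finset G} {N : ℕ} {C₁ C₂ : ℝ} (H : Geo S N C₁ C₂) (n : ℕ) (x : G) :
    x ∈ H.ball n ↔ wordDist S 1 x ≤ n := by
  simp [Geo.ball]

lemma Geo.card_ball [Group G] {S : Finset G} {N : ℕ} {C₁ C₂ : ℝ} (H : Geo S N C₁ C₂) (n : ℕ)
    (hn : 1 ≤ n) :
    C₁ * (n : ℝ) ^ N ≤ ((H.ball n).card : ℝ) ∧ ((H.ball n).card : ℝ) ≤ C₂ * (n : ℝ) ^ N := by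
  have h : Nat.card {x : G // wordDist S 1 x ≤ n} = (H.ball n).card := by
    rw [Geo.ball, ← Set.ncard_eq_toFinset_card _ (H.ball_finite n)]
    rfl
  have := H.growth n hn
  rwa [h] at this

lemma gradSq_nonneg [Group G] (S : Finset G) (f : G → ℝ) (x : G) : 0 ≤ gradSq S f x :=
  Finset.sum_nonneg (fun _ _ => sq_nonneg _)

lemma gradSq_ge [Group G] (S : Finset G) (f : G → ℝ) (x s : G) (hs : s ∈ S) :
    (f (x * s) - f x) ^ 2 ≤ gradSq S f x :=
  Finset.single_le_sum (f := fun s => (f (x * s) - f x) ^ 2) (fun _ _ => sq_nonneg _) hs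

lemma trans_sq [Group G] (S : Finset G) (f : G → ℝ) (hf : Summable (gradSq S f)) (l : List G)
    (hl : ∀ s ∈ l, s ∈ S) :
    Summable (fun x => (f (x * l.prod) - f x) ^ 2) ∧
      ∑' x, (f (x * l.prod) - f x) ^ 2 ≤ (l.length : ℝ) ^ 2 * ∑' x, gradSq S f x := by
  induction l with
  | nil => simp [summable_zero]
  | cons s l ih =>
    obtain ⟨ih1, ih2⟩ := ih (fun t ht => hl t (List.mem_cons_of_mem _ ht))
    have hs : s ∈ S := hl s List.mem_cons_self
    have s1 : Summable (fun x => (f (x * s) - f x) ^ 2) :=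
      Summable.of_nonneg_of_le (fun _ => sq_nonneg _) (fun x => gradSq_ge S f x s hs) hf
    have t1 : ∑' x, (f (x * s) - f x) ^ 2 ≤ ∑' x, gradSq S f x :=
      s1.tsum_le_tsum (fun x => gradSq_ge S f x s hs) hf
    have D0 : 0 ≤ ∑' x, gradSq S f x := tsum_nonneg (gradSq_nonneg S f)
    have s2 : Summable (fun x => (f (x * s * l.prod) - f (x * s)) ^ 2) :=
      (Equiv.mulRight s).summable_iff (f := fun x => (f (x * l.prod) - f x) ^ 2) |>.2 ih1
    have t2 : ∑' x, (f (x * s * l.prod) - f (x * s)) ^ 2 = ∑' x, (f (x * l.prod) - f x) ^ 2 :=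
      (Equiv.mulRight s).tsum_eq (fun x => (f (x * l.prod) - f x) ^ 2)
    rcases Nat.eq_zero_or_pos l.length with h0 | hk
    · rw [List.length_eq_zero_iff] at h0
      subst h0
      simpa using ⟨s1, t1⟩
    · have hk' : (0 : ℝ) < l.length := by exact_mod_cast hk
      set k : ℝ := ((l.length : ℕ) : ℝ) with hkdef
      have bd : ∀ x, (f (x * (s * l.prod)) - f x) ^ 2 ≤
          (1 + 1 / k) * (f (x * s * l.prod) - f (x * s)) ^ 2 + (1 + k) * (f (x * s) - f x) ^ 2 := by
        intro x
        rw [← mul_assoc]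
        set a := f (x * s * l.prod) - f (x * s)
        set b := f (x * s) - f x
        have e : f (x * s * l.prod) - f x = a + b := by simp only [a, b]; ring
        rw [e]
        have : (1 + 1 / k) * a ^ 2 + (1 + k) * b ^ 2 - (a + b) ^ 2 = (a - k * b) ^ 2 / k := by
          field_simp; ring
        have h2 : 0 ≤ (a - k * b) ^ 2 / k := by positivity
        linarith
      have ssum := (s2.mul_left (1 + 1 / k)).add (s1.mul_left (1 + k))
      have sfin : Summable (fun x => (f (x * (s * l.prod)) - f x) ^ 2) :=
        Summable.of_nonneg_of_le (fun _ => sq_nonneg _) bd ssum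
      simp only [List.prod_cons, List.length_cons]
      refine ⟨sfin, (sfin.tsum_le_tsum bd ssum).trans ?_⟩
      rw [(s2.mul_left _).tsum_add (s1.mul_left _), tsum_mul_left, tsum_mul_left, t2]
      push_cast
      rw [← hkdef]
      calc _ ≤ (1 + 1 / k) * (k ^ 2 * ∑' x, gradSq S f x) + (1 + k) * ∑' x, gradSq S f x := by
            gcongr
        _ = _ := by field_simp; ring

lemma Geo.faberKrahn [Group G] {S : Finset G} {N : ℕ} {C₁ C₂ : ℝ} (H : Geo S N C₁ C₂)
    (f : G → ℝ) (Ω : Finset G) (h0 : ∀ x, x ∉ Ω → f x = 0) (hf : Summable (gradSq S f)) :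
    ∑ x ∈ Ω, f x ^ 2 ≤ 4 * ((4 / C₁) ^ ((1 : ℝ) / N) + 1) ^ 2 * (Ω.card : ℝ) ^ ((2 : ℝ) / N) *
      ∑' x, gradSq S f x := by
  have hC₁ := H.hC₁
  have D0 : 0 ≤ ∑' x, gradSq S f x := tsum_nonneg (gradSq_nonneg S f)
  have hNpos : (0 : ℝ) < N := by have := H.hN; exact_mod_cast (by omega : 0 < N)
  rcases Ω.eq_empty_or_nonempty with he | hne
  · subst he
    simp only [Finset.sum_empty]
    positivity
  have hcard : (1 : ℝ) ≤ Ω.card := by exact_mod_cast hne.card_pos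
  set c : ℝ := (Ω.card : ℝ) with hc
  set y : ℝ := (4 / C₁ * c) ^ ((1 : ℝ) / N) with hy
  have hypos : 0 < y := by positivity
  set ρ : ℕ := ⌈y⌉₊ with hρ
  have hρ1 : 1 ≤ ρ := Nat.one_le_ceil_iff.2 hypos
  have hB : 4 * c ≤ ((H.ball ρ).card : ℝ) := by
    refine le_trans ?_ (H.card_ball ρ hρ1).1
    have : y ≤ ρ := Nat.le_ceil y
    have h2 : y ^ N ≤ (ρ : ℝ) ^ N := by gcongr
    have h3 : y ^ N = 4 / C₁ * c := by
      rw [hy, ← Real.rpow_natCast, ← Real.rpow_mul (by positivity)]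
      rw [one_div_mul_cancel hNpos.ne', Real.rpow_one]
    rw [h3] at h2
    calc 4 * c = C₁ * (4 / C₁ * c) := by field_simp
      _ ≤ _ := by gcongr
  set b : ℝ := ((H.ball ρ).card : ℝ) with hb
  set X := ∑ x ∈ Ω, f x ^ 2 with hX
  have hX0 : 0 ≤ X := Finset.sum_nonneg (fun _ _ => sq_nonneg _)
  set D := ∑' x, gradSq S f x with hD
  -- sum over ball
  have e1 : ∀ g ∈ H.ball ρ, ∑ x ∈ Ω, (f (x * g) - f x) ^ 2 ≤ (ρ : ℝ) ^ 2 * D := by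
    intro g hg
    rw [H.mem_ball] at hg
    obtain ⟨l, h1, h2, h3⟩ := H.exists_list g
    obtain ⟨q1, q2⟩ := trans_sq S f hf l h1
    rw [← h3] at q1 q2
    refine (q1.sum_le_tsum Ω (fun _ _ => sq_nonneg _)).trans (q2.trans ?_)
    have : (l.length : ℝ) ≤ ρ := by rw [h2]; exact_mod_cast hg
    gcongr
  have e2 : ∀ x ∈ Ω, ∑ g ∈ H.ball ρ, f (x * g) ^ 2 ≤ X := by
    classical
    intro x _
    rw [← Finset.sum_image (s := H.ball ρ) (g := fun g => x * g) (f := fun z => f z ^ 2)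
      (fun a _ b _ hab => mul_left_cancel hab)]
    rw [hX]
    calc ∑ z ∈ (H.ball ρ).image (fun g => x * g), f z ^ 2
        = ∑ z ∈ ((H.ball ρ).image (fun g => x * g)).filter (· ∈ Ω), f z ^ 2 := by
          rw [Finset.sum_filter]
          refine Finset.sum_congr rfl (fun z _ => ?_)
          split_ifs with h
          · rfl
          · rw [h0 z h]; norm_num
      _ ≤ _ := Finset.sum_le_sum_of_subset_of_nonneg (fun z hz => (Finset.mem_filter.1 hz).2)
          (fun _ _ _ => sq_nonneg _)
  have e3 : b * X ≤ 2 * (b * (ρ ^ 2 * D)) + 2 * (c * X) := by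
    calc b * X = ∑ g ∈ H.ball ρ, ∑ x ∈ Ω, f x ^ 2 := by rw [Finset.sum_const, nsmul_eq_mul]
      _ ≤ ∑ g ∈ H.ball ρ, ∑ x ∈ Ω, (2 * (f (x * g) - f x) ^ 2 + 2 * f (x * g) ^ 2) := by
          refine Finset.sum_le_sum (fun g _ => Finset.sum_le_sum (fun x _ => ?_))
          nlinarith [sq_nonneg (f (x * g) - f x + f (x * g)), sq_nonneg (2 * f (x * g) - f x)]
      _ = 2 * ∑ g ∈ H.ball ρ, ∑ x ∈ Ω, (f (x * g) - f x) ^ 2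
          + 2 * ∑ x ∈ Ω, ∑ g ∈ H.ball ρ, f (x * g) ^ 2 := by
          rw [Finset.sum_comm (s := Ω)]
          simp only [Finset.sum_add_distrib, Finset.mul_sum]
      _ ≤ 2 * ∑ g ∈ H.ball ρ, (ρ ^ 2 * D) + 2 * ∑ x ∈ Ω, X := by
          gcongr with g hg x hx
          · exact e1 g hg
          · exact e2 x hx
      _ = _ := by rw [Finset.sum_const, Finset.sum_const, nsmul_eq_mul, nsmul_eq_mul]
  have hbpos : 0 < b := by linarith
  have e4 : X ≤ 4 * (ρ ^ 2 * D) := by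
    have : b * X ≤ b * (4 * (ρ ^ 2 * D)) := by nlinarith
    exact le_of_mul_le_mul_left this hbpos
  have e5 : (ρ : ℝ) ≤ ((4 / C₁) ^ ((1 : ℝ) / N) + 1) * c ^ ((1 : ℝ) / N) := by
    have h1 : (ρ : ℝ) ≤ y + 1 := (Nat.ceil_lt_add_one hypos.le).le
    have h2 : y = (4 / C₁) ^ ((1 : ℝ) / N) * c ^ ((1 : ℝ) / N) := by
      rw [hy, Real.mul_rpow (by positivity) (by positivity)]
    have h3 : 1 ≤ c ^ ((1 : ℝ) / N) := Real.one_le_rpow hcard (by positivity)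
    rw [add_mul, one_mul, ← h2]
    linarith
  have e6 : (c ^ ((1 : ℝ) / N)) ^ 2 = c ^ ((2 : ℝ) / N) := by
    rw [← Real.rpow_natCast, ← Real.rpow_mul (by positivity)]
    congr 1
    push_cast
    ring
  calc X ≤ 4 * (ρ ^ 2 * D) := e4
    _ ≤ 4 * ((((4 / C₁) ^ ((1 : ℝ) / N) + 1) * c ^ ((1 : ℝ) / N)) ^ 2 * D) := by gcongr
    _ = _ := by rw [mul_pow, e6]; ring



/-- Dyadic truncation. -/
def tr (t a : ℝ) : ℝ := min (max a t) (2 * t) - t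

lemma tr_mono (t a b : ℝ) (h : b ≤ a) : tr t b ≤ tr t a := by
  unfold tr
  have : min (max b t) (2 * t) ≤ min (max a t) (2 * t) :=
    min_le_min (max_le_max h le_rfl) le_rfl
  linarith

lemma clamp_succ (ε t a : ℝ) (hε : 0 < ε) (ht : ε ≤ t) :
    min (max a ε) (2 * t) = min (max a ε) t + tr t a := by
  unfold tr
  rcases le_total a t with h1 | h1
  · have e1 : max a ε ≤ t := max_le h1 ht
    rw [min_eq_left (by linarith), min_eq_left e1, max_eq_right h1, min_eq_left (by linarith)]
    ring
  · rw [max_eq_left (ht.trans h1), max_eq_left h1, min_eq_right h1]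
    ring

lemma tr_sum_aux (ε a b : ℝ) (hε : 0 < ε) (h : b ≤ a) (m : ℕ) :
    ∑ k ∈ Finset.range m, (tr (ε * 2 ^ k) a - tr (ε * 2 ^ k) b) ^ 2 ≤
      (min (max a ε) (ε * 2 ^ m) - min (max b ε) (ε * 2 ^ m)) ^ 2 := by
  induction m with
  | zero => simp
  | succ m ih =>
    have ht : ε ≤ ε * 2 ^ m := le_mul_of_one_le_right hε.le (one_le_pow₀ (by norm_num))
    rw [Finset.sum_range_succ]
    have e : ε * 2 ^ (m + 1) = 2 * (ε * 2 ^ m) := by ring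
    rw [e, clamp_succ ε _ a hε ht, clamp_succ ε _ b hε ht]
    have m1 := tr_mono (ε * 2 ^ m) a b h
    have m2 : min (max b ε) (ε * 2 ^ m) ≤ min (max a ε) (ε * 2 ^ m) :=
      min_le_min (max_le_max h le_rfl) le_rfl
    have := mul_nonneg (sub_nonneg.2 m1) (sub_nonneg.2 m2)
    nlinarith

lemma tr_sum_sq (ε a b : ℝ) (hε : 0 < ε) (m : ℕ) :
    ∑ k ∈ Finset.range m, (tr (ε * 2 ^ k) a - tr (ε * 2 ^ k) b) ^ 2 ≤ (a - b) ^ 2 := by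
  wlog h : b ≤ a generalizing a b
  · have := this b a (le_of_not_ge h)
    calc _ = ∑ k ∈ Finset.range m, (tr (ε * 2 ^ k) b - tr (ε * 2 ^ k) a) ^ 2 :=
          Finset.sum_congr rfl (fun k _ => by ring)
      _ ≤ _ := this
      _ = _ := by ring
  refine (tr_sum_aux ε a b hε h m).trans ?_
  have m2 : min (max b ε) (ε * 2 ^ m) ≤ min (max a ε) (ε * 2 ^ m) :=
      min_le_min (max_le_max h le_rfl) le_rfl
  have m3 : min (max a ε) (ε * 2 ^ m) - min (max b ε) (ε * 2 ^ m) ≤ a - b := by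
    have h1 : max a ε ≤ max b ε + (a - b) := by
      apply max_le
      · linarith [le_max_left b ε]
      · linarith [le_max_right b ε]
    have h2 : min (max a ε) (ε * 2 ^ m) ≤ min (max b ε) (ε * 2 ^ m) + (a - b) := by
      rw [← min_add_add_right]
      apply min_le_min h1
      linarith
    linarith
  have : 0 ≤ min (max a ε) (ε * 2 ^ m) - min (max b ε) (ε * 2 ^ m) := by linarith
  gcongr

lemma tr_zero (t a : ℝ) (ht : 0 ≤ t) (h : a ≤ t) : tr t a = 0 := by
  unfold tr
  rw [max_eq_right h, min_eq_left (by linarith)]; ring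

lemma tr_top (t a : ℝ) (ht : 0 ≤ t) (h : 2 * t ≤ a) : tr t a = t := by
  unfold tr
  rw [max_eq_left (by linarith), min_eq_right h]; ring

/-- Sobolev constant for finitely supported functions. -/
def sobC (N : ℕ) (C₁ : ℝ) : ℝ :=
  2 ^ (2 * (N : ℝ) / ((N : ℝ) - 2)) * (2 ^ (2 * (N : ℝ) / ((N : ℝ) - 2)) *
    (4 * ((4 / C₁) ^ ((1 : ℝ) / N) + 1) ^ 2)) ^ ((N : ℝ) / ((N : ℝ) - 2))

set_option maxHeartbeats 1600000 in
lemma Geo.sobolev_fin [Group G] {S : Finset G} {N : ℕ} {C₁ C₂ : ℝ} (H : Geo S N C₁ C₂)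
    (f : G → ℝ) (F : Finset G) (h0 : ∀ x, x ∉ F → f x = 0) (hpos : ∀ x ∈ F, 0 < f x)
    (hf : Summable (gradSq S f)) :
    ∑ x ∈ F, f x ^ (2 * (N : ℝ) / ((N : ℝ) - 2)) ≤
      sobC N C₁ * (∑' x, gradSq S f x) ^ ((N : ℝ) / ((N : ℝ) - 2)) := by
  have hC₁ := H.hC₁
  have hN3 : (3 : ℝ) ≤ N := by exact_mod_cast H.hN
  have hN2 : (0 : ℝ) < (N : ℝ) - 2 := by linarith
  have D0 : 0 ≤ ∑' x, gradSq S f x := tsum_nonneg (gradSq_nonneg S f)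
  set q : ℝ := 2 * (N : ℝ) / ((N : ℝ) - 2) with hq
  have hq0 : 0 < q := by positivity
  rcases F.eq_empty_or_nonempty with he | hne
  · subst he
    simp only [Finset.sum_empty, sobC]
    positivity
  obtain ⟨ε, hε, hεF⟩ : ∃ ε : ℝ, 0 < ε ∧ ∀ x ∈ F, 2 * ε < f x := by
    obtain ⟨x0, hx0, hmin⟩ := F.exists_min_image f hne
    refine ⟨f x0 / 4, by have := hpos x0 hx0; positivity, fun x hx => ?_⟩
    have := hmin x hx
    have := hpos x0 hx0
    linarith
  obtain ⟨m, hm1, hmF⟩ : ∃ m : ℕ, 1 ≤ m ∧ ∀ x ∈ F, f x ≤ ε * 2 ^ (m + 1) := by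
    obtain ⟨x0, hx0, hmax⟩ := F.exists_max_image f hne
    obtain ⟨n, hn⟩ := pow_unbounded_of_one_lt (f x0 / ε) (by norm_num : (1 : ℝ) < 2)
    refine ⟨n + 1, by omega, fun x hx => (hmax x hx).trans ?_⟩
    rw [div_lt_iff₀ hε] at hn
    have : (2 : ℝ) ^ n ≤ 2 ^ (n + 1 + 1) := pow_le_pow_right₀ (by norm_num) (by omega)
    nlinarith
  set t : ℕ → ℝ := fun k => ε * 2 ^ k with ht
  have ht0 : ∀ k, 0 < t k := fun k => by simp only [ht]; positivity
  have ht1 : ∀ k, t (k + 1) = 2 * t k := fun k => by simp only [ht]; ring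
  set Ω : ℕ → Finset G := fun k => F.filter (fun x => t k < f x) with hΩ
  set fk : ℕ → G → ℝ := fun k x => tr (t k) (f x) with hfk
  have hgk : ∀ m x, ∑ k ∈ Finset.range m, gradSq S (fk k) x ≤ gradSq S f x := by
    intro m x
    unfold gradSq
    rw [Finset.sum_comm]
    exact Finset.sum_le_sum (fun s _ => tr_sum_sq ε _ _ hε m)
  have hgk1 : ∀ k x, gradSq S (fk k) x ≤ gradSq S f x := by
    intro k x
    refine le_trans ?_ (hgk (k + 1) x)
    exact Finset.single_le_sum (f := fun k => gradSq S (fk k) x)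
      (fun _ _ => gradSq_nonneg _ _ _) (Finset.self_mem_range_succ k)
  have hsk : ∀ k, Summable (gradSq S (fk k)) := fun k =>
    Summable.of_nonneg_of_le (gradSq_nonneg _ _) (hgk1 k) hf
  set Dk : ℕ → ℝ := fun k => ∑' x, gradSq S (fk k) x with hDk
  have hDk0 : ∀ k, 0 ≤ Dk k := fun k => tsum_nonneg (gradSq_nonneg S _)
  set D := ∑' x, gradSq S f x with hD
  have hDsum : ∑ k ∈ Finset.range m, Dk k ≤ D := by
    simp only [hDk]
    rw [← Summable.tsum_finsetSum (fun k _ => hsk k)]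
    exact (summable_sum (fun k _ => hsk k)).tsum_le_tsum (hgk m) hf
  set C := 4 * ((4 / C₁) ^ ((1 : ℝ) / N) + 1) ^ 2 with hC
  have hC0 : 0 < C := by positivity
  have fk0 : ∀ k x, x ∉ Ω k → fk k x = 0 := by
    intro k x hx
    apply tr_zero _ _ (ht0 k).le
    by_cases hxF : x ∈ F
    · simp only [hΩ, Finset.mem_filter, not_and, not_lt] at hx
      exact hx hxF
    · rw [h0 x hxF]; exact (ht0 k).le
  have step : ∀ k, t k ^ 2 * ((Ω (k + 1)).card : ℝ) ≤ C * ((Ω k).card : ℝ) ^ ((2 : ℝ) / N) * Dk k := by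
    intro k
    refine le_trans ?_ (H.faberKrahn (fk k) (Ω k) (fk0 k) (hsk k))
    have sub : Ω (k + 1) ⊆ Ω k := by
      intro x hx
      simp only [hΩ, Finset.mem_filter] at hx ⊢
      refine ⟨hx.1, lt_of_le_of_lt ?_ hx.2⟩
      rw [ht1]; linarith [ht0 k]
    calc t k ^ 2 * ((Ω (k + 1)).card : ℝ) = ∑ x ∈ Ω (k + 1), fk k x ^ 2 := by
          rw [Finset.sum_congr rfl (g := fun _ => t k ^ 2), Finset.sum_const, nsmul_eq_mul, mul_comm]
          intro x hx
          simp only [hΩ, Finset.mem_filter] at hx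
          simp only [hfk]
          rw [tr_top _ _ (ht0 k).le]
          rw [← ht1]; exact hx.2.le
      _ ≤ _ := Finset.sum_le_sum_of_subset_of_nonneg sub (fun _ _ _ => sq_nonneg _)
  set a : ℕ → ℝ := fun k => t k ^ q * ((Ω k).card : ℝ) with ha
  have ha0 : ∀ k, 0 ≤ a k := fun k => by have := ht0 k; simp only [ha]; positivity
  have astep : ∀ k, a (k + 1) ≤ 2 ^ q * C * (a k ^ ((2 : ℝ) / N) * Dk k) := by
    intro k
    have tk := ht0 k
    have e1 : a k ^ ((2 : ℝ) / N) = t k ^ (q - 2) * ((Ω k).card : ℝ) ^ ((2 : ℝ) / N) := by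
      simp only [ha]
      rw [Real.mul_rpow (by positivity) (by positivity), ← Real.rpow_mul tk.le]
      congr 2
      rw [hq]; field_simp; ring
    have e2 : t k ^ q = t k ^ (q - 2) * t k ^ 2 := by
      rw [← Real.rpow_natCast (t k) 2, ← Real.rpow_add tk]; congr 1; push_cast; ring
    calc a (k + 1) = 2 ^ q * t k ^ (q - 2) * (t k ^ 2 * ((Ω (k + 1)).card : ℝ)) := by
          simp only [ha]
          rw [ht1, Real.mul_rpow (by norm_num) tk.le, e2]; ring
      _ ≤ 2 ^ q * t k ^ (q - 2) * (C * ((Ω k).card : ℝ) ^ ((2 : ℝ) / N) * Dk k) := by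
          exact mul_le_mul_of_nonneg_left (step k) (by positivity)
      _ = _ := by rw [e1]; ring
  set A := ∑ k ∈ Finset.range m, a (k + 1) with hA
  have hΩ01 : ∀ k ≤ 1, Ω k = F := by
    intro k hk
    apply Finset.filter_true_of_mem
    intro x hx
    refine lt_of_le_of_lt ?_ (hεF x hx)
    simp only [ht]
    interval_cases k <;> nlinarith
  have ale : ∀ k ∈ Finset.range m, a (k + 1) ≤ A := fun k hk =>
    Finset.single_le_sum (f := fun k => a (k + 1)) (fun _ _ => ha0 _) hk
  have ale0 : ∀ k ∈ Finset.range m, a k ≤ A := by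
    intro k hk
    rw [Finset.mem_range] at hk
    rcases k with _ | k
    · refine le_trans ?_ (ale 0 (Finset.mem_range.2 hk))
      simp only [ha]
      rw [hΩ01 0 (by omega), hΩ01 (0 + 1) (by omega)]
      have := ht0 0
      gcongr
      rw [ht1]; linarith
    · exact ale k (Finset.mem_range.2 (by omega))
  have hFc : (0 : ℝ) < F.card := by exact_mod_cast hne.card_pos
  have hApos : 0 < A := by
    refine lt_of_lt_of_le ?_ (ale 0 (Finset.mem_range.2 hm1))
    simp only [ha]
    rw [hΩ01 (0 + 1) (by omega)]
    have := ht0 (0 + 1)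
    positivity
  clear_value A C Dk D
  have main : A ≤ (2 ^ q * C * D) * A ^ ((2 : ℝ) / N) := by
    calc A ≤ ∑ k ∈ Finset.range m, 2 ^ q * C * (A ^ ((2 : ℝ) / N) * Dk k) := by
          conv_lhs => rw [hA]
          refine Finset.sum_le_sum (fun k hk => (astep k).trans ?_)
          have := ale0 k hk
          have := ha0 k
          have := hDk0 k
          gcongr
      _ = 2 ^ q * C * (A ^ ((2 : ℝ) / N) * ∑ k ∈ Finset.range m, Dk k) := by
          rw [← Finset.mul_sum, ← Finset.mul_sum]
      _ ≤ 2 ^ q * C * (A ^ ((2 : ℝ) / N) * D) :=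
          mul_le_mul_of_nonneg_left (mul_le_mul_of_nonneg_left hDsum (by positivity)) (by positivity)
      _ = _ := by ring
  have main2 : A ^ (1 - (2 : ℝ) / N) ≤ 2 ^ q * C * D := by
    rw [Real.rpow_sub hApos, Real.rpow_one, div_le_iff₀ (by positivity)]
    exact main
  have main3 : A ≤ (2 ^ q * C * D) ^ ((N : ℝ) / ((N : ℝ) - 2)) := by
    have h := Real.rpow_le_rpow (by positivity) main2 (by positivity : 0 ≤ (N : ℝ) / ((N : ℝ) - 2))
    rw [← Real.rpow_mul hApos.le] at h
    have e : (1 - (2 : ℝ) / N) * ((N : ℝ) / ((N : ℝ) - 2)) = 1 := by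
      have h1 : (N : ℝ) ≠ 0 := by linarith
      have h2 : (N : ℝ) - 2 ≠ 0 := hN2.ne'
      clear * - h1 h2
      field_simp
    rwa [e, Real.rpow_one] at h
  have fin : ∑ x ∈ F, f x ^ q ≤ 2 ^ q * A := by
    have pt : ∀ x ∈ F, f x ^ q ≤ ∑ k ∈ Finset.range m, if t (k + 1) < f x then 2 ^ q * t (k + 1) ^ q else 0 := by
      intro x hx
      obtain ⟨k, hk, hk1, hk2⟩ : ∃ k ∈ Finset.range m, t (k + 1) < f x ∧ f x ≤ t (k + 2) := by
        classical
        have hex : ∃ k, f x ≤ t (k + 2) := ⟨m - 1, by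
          have := hmF x hx
          simp only [ht]
          have e : m - 1 + 2 = m + 1 := by omega
          rw [e]; exact this⟩
        refine ⟨Nat.find hex, ?_, ?_, Nat.find_spec hex⟩
        · rw [Finset.mem_range]
          have : Nat.find hex ≤ m - 1 := Nat.find_min' hex (by
            have := hmF x hx
            simp only [ht]
            have e : m - 1 + 2 = m + 1 := by omega
            rw [e]; exact this)
          omega
        · rcases h : Nat.find hex with _ | j
          · have := hεF x hx
            simp only [ht, zero_add, pow_one]; linarith
          · have := Nat.find_min hex (m := j) (by omega)
            exact not_le.1 this
      refine le_trans ?_ (Finset.single_le_sum (f := fun k => if t (k + 1) < f x then 2 ^ q * t (k + 1) ^ q else 0)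
        (fun k _ => ?_) hk)
      · simp only [if_pos hk1]
        have := ht0 (k + 1)
        rw [← Real.mul_rpow (by norm_num) this.le]
        have := hpos x hx
        apply Real.rpow_le_rpow this.le _ hq0.le
        rw [← ht1]; exact hk2
      · have := ht0 (k + 1)
        split_ifs <;> positivity
    refine (Finset.sum_le_sum pt).trans ?_
    rw [Finset.sum_comm, hA, Finset.mul_sum]
    refine Finset.sum_le_sum (fun k _ => ?_)
    rw [← Finset.sum_filter, Finset.sum_const, nsmul_eq_mul]
    simp only [ha, hΩ]
    apply le_of_eq
    ring
  calc ∑ x ∈ F, f x ^ q ≤ 2 ^ q * A := fin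
    _ ≤ 2 ^ q * (2 ^ q * C * D) ^ ((N : ℝ) / ((N : ℝ) - 2)) := by gcongr
    _ = _ := by
      rw [Real.mul_rpow (by positivity) D0, sobC, mul_assoc, hC]

lemma Geo.sobC_pos [Group G] {S : Finset G} {N : ℕ} {C₁ C₂ : ℝ} (H : Geo S N C₁ C₂) :
    0 < sobC N C₁ := by
  have := H.hC₁
  unfold sobC
  positivity

lemma Geo.sobolev_sum [Group G] {S : Finset G} {N : ℕ} {C₁ C₂ : ℝ} (H : Geo S N C₁ C₂)
    (w : G → ℝ) (hw : MemD12 S N w) (E : Finset G) :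
    ∑ x ∈ E, |w x| ^ (2 * (N : ℝ) / ((N : ℝ) - 2)) ≤
      sobC N C₁ * (∑' x, gradSq S w x) ^ ((N : ℝ) / ((N : ℝ) - 2)) := by
  have hN3 : (3 : ℝ) ≤ N := by exact_mod_cast H.hN
  have hN2 : (0 : ℝ) < (N : ℝ) - 2 := by linarith
  obtain ⟨hw1, hw2⟩ := hw
  unfold Memlp at hw1
  set q : ℝ := 2 * (N : ℝ) / ((N : ℝ) - 2) with hq
  have hq0 : 0 < q := by positivity
  have hfin : ∀ ε : ℝ, 0 < ε → {x | ε < |w x|}.Finite := by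
    intro ε hε
    have h1 := hw1.tendsto_cofinite_zero
    have h2 := h1.eventually (gt_mem_nhds (show (0 : ℝ) < ε ^ q by positivity))
    rw [Filter.eventually_cofinite] at h2
    refine h2.subset (fun x hx => ?_)
    simp only [Set.mem_ofPred_eq, not_lt] at hx ⊢
    exact Real.rpow_le_rpow hε.le hx.le hq0.le
  have key : ∀ ε : ℝ, 0 < ε → ∑ x ∈ E, (max (|w x| - ε) 0) ^ q ≤
      sobC N C₁ * (∑' x, gradSq S w x) ^ ((N : ℝ) / ((N : ℝ) - 2)) := by
    intro ε hε
    classical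
    set f : G → ℝ := fun x => max (|w x| - ε) 0 with hf
    set F := (hfin ε hε).toFinset with hF
    have hg : ∀ x, gradSq S f x ≤ gradSq S w x := by
      intro x
      refine Finset.sum_le_sum (fun s _ => ?_)
      apply sq_le_sq.2
      calc |f (x * s) - f x| ≤ |(|w (x * s)| - ε) - (|w x| - ε)| := abs_max_sub_max_le_abs _ _ _
        _ = abs (|w (x * s)| - |w x|) := by congr 1; ring
        _ ≤ _ := abs_abs_sub_abs_le_abs_sub _ _
    have hs : Summable (gradSq S f) := Summable.of_nonneg_of_le (gradSq_nonneg _ _) hg hw2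
    have f0 : ∀ x, x ∉ F → f x = 0 := by
      intro x hx
      simp only [hF, Set.Finite.mem_toFinset, Set.mem_ofPred_eq, not_lt] at hx
      exact max_eq_right (by linarith)
    have h := H.sobolev_fin f F f0 (by
      intro x hx
      simp only [hF, Set.Finite.mem_toFinset, Set.mem_ofPred_eq] at hx
      exact lt_max_of_lt_left (by linarith)) hs
    have e1 : ∑ x ∈ E, f x ^ q ≤ ∑ x ∈ F, f x ^ q := by
      calc ∑ x ∈ E, f x ^ q = ∑ x ∈ E.filter (· ∈ F), f x ^ q := by
            rw [Finset.sum_filter]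
            refine Finset.sum_congr rfl (fun z _ => ?_)
            split_ifs with h
            · rfl
            · rw [f0 z h, Real.zero_rpow hq0.ne']
        _ ≤ _ := Finset.sum_le_sum_of_subset_of_nonneg (fun z hz => (Finset.mem_filter.1 hz).2)
            (fun z _ _ => Real.rpow_nonneg (le_max_right _ _) _)
    refine e1.trans (h.trans ?_)
    have := H.sobC_pos
    have := hs.tsum_le_tsum hg hw2
    have : 0 ≤ ∑' x, gradSq S f x := tsum_nonneg (gradSq_nonneg S f)
    gcongr
  have lim : Tendsto (fun ε : ℝ => ∑ x ∈ E, (max (|w x| - ε) 0) ^ q) (𝓝[>] 0)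
      (𝓝 (∑ x ∈ E, |w x| ^ q)) := by
    have : ContinuousAt (fun ε : ℝ => ∑ x ∈ E, (max (|w x| - ε) 0) ^ q) 0 := by
      apply Continuous.continuousAt
      apply continuous_finsetSum
      intro x _
      exact Continuous.rpow_const (by fun_prop) (fun _ => Or.inr hq0.le)
    have h := this.tendsto
    simp only [sub_zero] at h
    have e : ∑ x ∈ E, (max |w x| 0) ^ q = ∑ x ∈ E, |w x| ^ q :=
      Finset.sum_congr rfl (fun x _ => by rw [max_eq_left (abs_nonneg _)])
    rw [e] at h
    exact h.mono_left nhdsWithin_le_nhds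
  exact le_of_tendsto lim (by
    filter_upwards [self_mem_nhdsWithin] with ε hε
    exact key ε hε)

lemma Geo.sobolev [Group G] {S : Finset G} {N : ℕ} {C₁ C₂ : ℝ} (H : Geo S N C₁ C₂)
    (w : G → ℝ) (hw : MemD12 S N w) :
    ∑' x, |w x| ^ (2 * (N : ℝ) / ((N : ℝ) - 2)) ≤
      sobC N C₁ * (∑' x, gradSq S w x) ^ ((N : ℝ) / ((N : ℝ) - 2)) :=
  hw.1.tsum_le_of_sum_le (H.sobolev_sum w hw)



/-- Kernel hypotheses. -/
structure Ker [Group G] (S : Finset G) (N : ℕ) (α c₂ : ℝ) (R : G → G → ℝ) : Prop where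
  hα : 0 < α
  hαN : α < N
  hc₂ : 0 < c₂
  nonneg : ∀ x y, 0 ≤ R x y
  symm : ∀ x y, R x y = R y x
  up : ∀ x y : G, x ≠ y → R x y ≤ c₂ * (wordDist S x y : ℝ) ^ (α - (N : ℝ))
  diag : ∀ x : G, R x x ≤ c₂

/-- Distance to the identity, at least one. -/
def md [Group G] (S : Finset G) (g : G) : ℝ := max 1 (wordDist S 1 g : ℝ)

lemma md_pos [Group G] (S : Finset G) (g : G) : 0 < md S g :=
  lt_of_lt_of_le one_pos (le_max_left _ _)

lemma Ker.le_md [Group G] {S : Finset G} {N : ℕ} {C₁ C₂ : ℝ} (H : Geo S N C₁ C₂) {α c₂ : ℝ}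
    {R : G → G → ℝ} (K : Ker S N α c₂ R) (x y : G) :
    R x y ≤ c₂ * md S (x⁻¹ * y) ^ (α - (N : ℝ)) := by
  by_cases h : x = y
  · subst h
    have h0 : wordDist S 1 (1 : G) = 0 := by
      have := wordDist_le S ([] : List G) (by simp)
      simpa using this
    simp only [inv_mul_cancel, md, h0]
    simpa using K.diag x
  · have h1 : wordDist S 1 (x⁻¹ * y) ≠ 0 := by
      intro h2
      have := H.eq_one _ h2
      exact h (inv_mul_eq_one.1 this)
    have h3 : (1 : ℝ) ≤ wordDist S 1 (x⁻¹ * y) := by exact_mod_cast Nat.one_le_iff_ne_zero.2 h1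
    have := K.up x y h
    rwa [wordDist_eq, ← max_eq_right h3] at this

/-- Near-field constant. -/
def cA (N : ℕ) (C₂ α : ℝ) : ℝ := C₂ + C₂ * 2 ^ N / (2 ^ α - 1)

lemma two_rpow_gt {α : ℝ} (hα : 0 < α) : (0 : ℝ) < 2 ^ α - 1 := by
  have := Real.one_lt_rpow (by norm_num : (1 : ℝ) < 2) hα
  linarith

lemma near_sum [Group G] {S : Finset G} {N : ℕ} {C₁ C₂ : ℝ} (H : Geo S N C₁ C₂) {α : ℝ}
    (hα : 0 < α) (hαN : α < N) (m : ℕ) :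
    ∑ g ∈ H.ball (2 ^ m), md S g ^ (α - (N : ℝ)) ≤ cA N C₂ α * ((2 : ℝ) ^ m) ^ α := by
  classical
  have hC₂ := H.hC₂
  have h2α := two_rpow_gt hα
  induction m with
  | zero =>
    calc ∑ g ∈ H.ball (2 ^ 0), md S g ^ (α - (N : ℝ)) ≤ ∑ g ∈ H.ball (2 ^ 0), (1 : ℝ) := by
          refine Finset.sum_le_sum (fun g _ => ?_)
          exact Real.rpow_le_one_of_one_le_of_nonpos (le_max_left _ _) (by linarith)
      _ ≤ C₂ * ((2 ^ 0 : ℕ) : ℝ) ^ N := by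
          rw [Finset.sum_const, nsmul_eq_mul, mul_one]
          exact (H.card_ball _ (by norm_num)).2
      _ ≤ _ := by
          simp only [pow_zero, Nat.cast_one, one_pow, mul_one, Real.one_rpow, cA]
          have : 0 ≤ C₂ * 2 ^ N / (2 ^ α - 1) := by positivity
          linarith
  | succ m ih =>
    have sub : H.ball (2 ^ m) ⊆ H.ball (2 ^ (m + 1)) := by
      intro g hg
      rw [H.mem_ball] at *
      exact hg.trans (Nat.pow_le_pow_right (by norm_num) (by omega))
    rw [← Finset.sum_sdiff sub]
    set P : ℝ := (2 : ℝ) ^ m with hP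
    have hPpos : 0 < P := by positivity
    have ann : ∑ g ∈ H.ball (2 ^ (m + 1)) \ H.ball (2 ^ m), md S g ^ (α - (N : ℝ)) ≤
        C₂ * 2 ^ N * P ^ α := by
      calc _ ≤ ∑ g ∈ H.ball (2 ^ (m + 1)) \ H.ball (2 ^ m), P ^ (α - (N : ℝ)) := by
            refine Finset.sum_le_sum (fun g hg => ?_)
            rw [Finset.mem_sdiff, H.mem_ball, H.mem_ball, not_le] at hg
            refine Real.rpow_le_rpow_of_nonpos hPpos ?_ (by linarith)
            refine le_trans ?_ (le_max_right _ _)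
            rw [hP]
            exact_mod_cast hg.2.le
        _ = (((H.ball (2 ^ (m + 1)) \ H.ball (2 ^ m)).card : ℕ) : ℝ) * P ^ (α - (N : ℝ)) := by
            rw [Finset.sum_const, nsmul_eq_mul]
        _ ≤ (C₂ * (2 * P) ^ N) * P ^ (α - (N : ℝ)) := by
            gcongr
            refine le_trans (Nat.cast_le.2 (Finset.card_le_card Finset.sdiff_subset)) ?_
            refine (H.card_ball _ Nat.one_le_two_pow).2.trans (le_of_eq ?_)
            rw [hP]; push_cast; ring
        _ = _ := by
            rw [Real.rpow_sub hPpos, Real.rpow_natCast, mul_pow]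
            field_simp
    calc _ ≤ C₂ * 2 ^ N * P ^ α + cA N C₂ α * P ^ α := add_le_add ann ih
      _ ≤ cA N C₂ α * (2 ^ α * P ^ α) := by
          have e : C₂ * 2 ^ N ≤ cA N C₂ α * (2 ^ α - 1) := by
            rw [cA, add_mul, div_mul_cancel₀ _ h2α.ne']
            have : 0 ≤ C₂ * (2 ^ α - 1) := by positivity
            linarith
          have hPα : 0 < P ^ α := by positivity
          nlinarith
      _ = _ := by
          rw [← Real.mul_rpow (by norm_num) hPpos.le, hP]
          congr 2
          ring

lemma far_sum_aux [Group G] [DecidableEq G] {S : Finset G} {N : ℕ} {C₁ C₂ : ℝ} (H : Geo S N C₁ C₂) (m j : ℕ) :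
    ∑ g ∈ H.ball (2 ^ (m + j)) \ H.ball (2 ^ m), (md S g ^ (2 * N))⁻¹ ≤
      C₂ * 2 ^ (N + 1) * ((((2 : ℝ) ^ m) ^ N)⁻¹ - (((2 : ℝ) ^ (m + j)) ^ N)⁻¹) := by
  have hC₂ := H.hC₂
  induction j with
  | zero => simp
  | succ j ih =>
    set P : ℝ := (2 : ℝ) ^ (m + j) with hP
    have hPpos : 0 < P := by positivity
    have sub : H.ball (2 ^ (m + (j + 1))) \ H.ball (2 ^ m) ⊆
        (H.ball (2 ^ (m + j)) \ H.ball (2 ^ m)) ∪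
          (H.ball (2 ^ (m + (j + 1))) \ H.ball (2 ^ (m + j))) := by
      intro g hg
      simp only [Finset.mem_union, Finset.mem_sdiff, H.mem_ball] at *
      by_cases h : wordDist S 1 g ≤ 2 ^ (m + j)
      · exact Or.inl ⟨h, hg.2⟩
      · exact Or.inr ⟨hg.1, h⟩
    have nn : ∀ g, 0 ≤ (md S g ^ (2 * N))⁻¹ := fun g => by have := md_pos S g; positivity
    have ann : ∑ g ∈ H.ball (2 ^ (m + (j + 1))) \ H.ball (2 ^ (m + j)), (md S g ^ (2 * N))⁻¹ ≤
        C₂ * 2 ^ N * (P ^ N)⁻¹ := by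
      calc _ ≤ ∑ g ∈ H.ball (2 ^ (m + (j + 1))) \ H.ball (2 ^ (m + j)), (P ^ (2 * N))⁻¹ := by
            refine Finset.sum_le_sum (fun g hg => ?_)
            rw [Finset.mem_sdiff, H.mem_ball, H.mem_ball, not_le] at hg
            have : P ≤ md S g := by
              refine le_trans ?_ (le_max_right _ _)
              rw [hP]
              exact_mod_cast hg.2.le
            gcongr
        _ = (((H.ball (2 ^ (m + (j + 1))) \ H.ball (2 ^ (m + j))).card : ℕ) : ℝ) * (P ^ (2 * N))⁻¹ := by
            rw [Finset.sum_const, nsmul_eq_mul]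
        _ ≤ (C₂ * (2 * P) ^ N) * (P ^ (2 * N))⁻¹ := by
            gcongr
            refine le_trans (Nat.cast_le.2 (Finset.card_le_card Finset.sdiff_subset)) ?_
            refine (H.card_ball _ Nat.one_le_two_pow).2.trans (le_of_eq ?_)
            rw [hP]; push_cast; ring
        _ = _ := by
            rw [mul_pow, two_mul, pow_add]
            field_simp
    have e : ((2 : ℝ) ^ (m + (j + 1))) ^ N = 2 ^ N * P ^ N := by
      rw [← mul_pow, hP]; congr 1; ring
    rw [e, mul_inv]
    have hhalf : ((2 : ℝ) ^ N)⁻¹ ≤ 1 / 2 := by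
      rw [inv_eq_one_div]
      apply one_div_le_one_div_of_le (by norm_num)
      have := H.hN
      calc (2 : ℝ) = 2 ^ 1 := by norm_num
        _ ≤ _ := pow_le_pow_right₀ (by norm_num) (by omega)
    refine (Finset.sum_le_sum_of_subset_of_nonneg sub (fun _ _ _ => nn _)).trans ?_
    rw [Finset.sum_union (by
      rw [Finset.disjoint_left]
      intro g h1 h2
      exact (Finset.mem_sdiff.1 h2).2 (Finset.mem_sdiff.1 h1).1)]
    refine (add_le_add ih ann).trans ?_
    rw [pow_succ]
    have hPN : 0 < (P ^ N)⁻¹ := by positivity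
    have h2N : (0 : ℝ) < 2 ^ N := by positivity
    have := mul_le_mul_of_nonneg_left hhalf (by positivity : 0 ≤ C₂ * 2 ^ N * 2 * (P ^ N)⁻¹)
    nlinarith

lemma far_sum [Group G] {S : Finset G} {N : ℕ} {C₁ C₂ : ℝ} (H : Geo S N C₁ C₂) (m : ℕ)
    (F : Finset G) (hF : ∀ g ∈ F, 2 ^ m < wordDist S 1 g) :
    ∑ g ∈ F, (md S g ^ (2 * N))⁻¹ ≤ C₂ * 2 ^ (N + 1) * (((2 : ℝ) ^ m) ^ N)⁻¹ := by
  classical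
  have hC₂ := H.hC₂
  have nn : ∀ g, 0 ≤ (md S g ^ (2 * N))⁻¹ := fun g => by have := md_pos S g; positivity
  set j := F.sup (fun g => wordDist S 1 g) with hj
  have sub : F ⊆ H.ball (2 ^ (m + j)) \ H.ball (2 ^ m) := by
    intro g hg
    simp only [Finset.mem_sdiff, H.mem_ball, not_le]
    refine ⟨?_, hF g hg⟩
    have h1 : wordDist S 1 g ≤ j := Finset.le_sup (f := fun g => wordDist S 1 g) hg
    have h2 : j < 2 ^ j := Nat.lt_two_pow_self
    have h3 : 2 ^ j ≤ 2 ^ (m + j) := Nat.pow_le_pow_right (by norm_num) (by omega)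
    omega
  refine (Finset.sum_le_sum_of_subset_of_nonneg sub (fun _ _ _ => nn _)).trans ?_
  refine (far_sum_aux H m j).trans ?_
  have : 0 ≤ (((2 : ℝ) ^ (m + j)) ^ N)⁻¹ := by positivity
  gcongr
  linarith

/-- Far-field constant. -/
def cB (N : ℕ) (C₂ α : ℝ) : ℝ := (C₂ * 2 ^ (N + 1)) ^ (((N : ℝ) - α) / (2 * N))

/-- The Hardy–Littlewood–Sobolev exponent. -/
def rr (N : ℕ) (α : ℝ) : ℝ := 2 * N / (N + α)

lemma rr_pos {N : ℕ} {α : ℝ} (hα : 0 < α) (hαN : α < N) : 0 < rr N α := by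
  have : (0 : ℝ) < N := hα.trans hαN
  unfold rr; positivity

lemma Ker.tail [Group G] {S : Finset G} {N : ℕ} {C₁ C₂ : ℝ} (H : Geo S N C₁ C₂) {α c₂ : ℝ}
    {R : G → G → ℝ} (K : Ker S N α c₂ R) (x : G) (m : ℕ) (F : Finset G)
    (hF : ∀ y ∈ F, 2 ^ m < wordDist S 1 (x⁻¹ * y)) (f : G → ℝ) (hf : ∀ y, 0 ≤ f y) (B : ℝ)
    (hB : (∑ y ∈ F, f y ^ rr N α) ^ (1 / rr N α) ≤ B) :
    ∑ y ∈ F, R x y * f y ≤ c₂ * (cB N C₂ α * ((2 : ℝ) ^ m) ^ ((α - N) / 2) * B) := by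
  classical
  have hα := K.hα
  have hαN := K.hαN
  have hC₂ := H.hC₂
  have hc₂ := K.hc₂
  have hN0 : (0 : ℝ) < N := hα.trans hαN
  have hNα : (0 : ℝ) < N - α := by linarith
  have conj : (2 * (N : ℝ) / (N - α)).HolderConjugate (rr N α) := by
    rw [Real.holderConjugate_iff]
    constructor
    · rw [lt_div_iff₀ hNα]; linarith
    · unfold rr; rw [inv_div, inv_div]; field_simp; ring
  have e1 : ∑ y ∈ F, R x y * f y ≤ c₂ * ∑ y ∈ F, md S (x⁻¹ * y) ^ (α - (N : ℝ)) * f y := by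
    rw [Finset.mul_sum]
    refine Finset.sum_le_sum (fun y _ => ?_)
    rw [← mul_assoc]
    exact mul_le_mul_of_nonneg_right (K.le_md H x y) (hf y)
  refine e1.trans (mul_le_mul_of_nonneg_left ?_ hc₂.le)
  have e2 := Real.inner_le_Lp_mul_Lq_of_nonneg F conj
    (f := fun y => md S (x⁻¹ * y) ^ (α - (N : ℝ))) (g := f)
    (fun y _ => (Real.rpow_pos_of_pos (md_pos S _) _).le) (fun y _ => hf y)
  refine e2.trans ?_
  have e3 : ∑ y ∈ F, (md S (x⁻¹ * y) ^ (α - (N : ℝ))) ^ (2 * (N : ℝ) / (N - α)) ≤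
      C₂ * 2 ^ (N + 1) * (((2 : ℝ) ^ m) ^ N)⁻¹ := by
    have h := far_sum H m (F.image (fun y => x⁻¹ * y)) (by
      intro g hg
      obtain ⟨y, hy, rfl⟩ := Finset.mem_image.1 hg
      exact hF y hy)
    rw [Finset.sum_image (fun a _ b _ hab => mul_left_cancel hab)] at h
    refine le_trans (le_of_eq (Finset.sum_congr rfl (fun y _ => ?_))) h
    rw [← Real.rpow_mul (md_pos S _).le, ← Real.rpow_natCast, ← Real.rpow_neg (md_pos S _).le]
    congr 1
    push_cast
    field_simp
    ring
  have e4 : (∑ y ∈ F, (md S (x⁻¹ * y) ^ (α - (N : ℝ))) ^ (2 * (N : ℝ) / (N - α))) ^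
      (1 / (2 * (N : ℝ) / (N - α))) ≤ cB N C₂ α * ((2 : ℝ) ^ m) ^ ((α - N) / 2) := by
    refine (Real.rpow_le_rpow (Finset.sum_nonneg (fun y _ => Real.rpow_nonneg
      (Real.rpow_nonneg (md_pos S _).le _) _)) e3 (by positivity)).trans (le_of_eq ?_)
    rw [Real.mul_rpow (by positivity) (by positivity), one_div_div, cB]
    congr 1
    have hP : (0 : ℝ) < 2 ^ m := by positivity
    rw [← Real.rpow_natCast _ N, ← Real.rpow_neg hP.le, ← Real.rpow_mul hP.le]
    congr 1
    field_simp
    ring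
  have hcB : 0 ≤ cB N C₂ α := by unfold cB; positivity
  exact mul_le_mul e4 hB (Real.rpow_nonneg (Finset.sum_nonneg (fun y _ =>
    Real.rpow_nonneg (hf y) _)) _) (by positivity)

lemma Ker.core [Group G] {S : Finset G} {N : ℕ} {C₁ C₂ : ℝ} (H : Geo S N C₁ C₂) {α c₂ : ℝ}
    {R : G → G → ℝ} (K : Ker S N α c₂ R) (x : G) (m : ℕ) (F : Finset G)
    (f : G → ℝ) (hf : ∀ y, 0 ≤ f y) (B t : ℝ) (ht : 0 ≤ t) (hft : ∀ y ∈ F, f y ≤ t)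
    (hB : (∑ y ∈ F, f y ^ rr N α) ^ (1 / rr N α) ≤ B) :
    ∑ y ∈ F, R x y * f y ≤ c₂ * (cA N C₂ α * ((2 : ℝ) ^ m) ^ α * t) +
      c₂ * (cB N C₂ α * ((2 : ℝ) ^ m) ^ ((α - N) / 2) * B) := by
  classical
  have hc₂ := K.hc₂
  have hr := rr_pos K.hα K.hαN
  rw [← Finset.sum_filter_add_sum_filter_not F (fun y => wordDist S 1 (x⁻¹ * y) ≤ 2 ^ m)]
  refine add_le_add ?_ ?_
  · calc _ ≤ ∑ y ∈ F.filter (fun y => wordDist S 1 (x⁻¹ * y) ≤ 2 ^ m),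
          c₂ * md S (x⁻¹ * y) ^ (α - (N : ℝ)) * t := by
          refine Finset.sum_le_sum (fun y hy => ?_)
          exact mul_le_mul (K.le_md H x y) (hft y (Finset.mem_filter.1 hy).1) (hf y)
            (mul_nonneg hc₂.le (Real.rpow_nonneg (md_pos S _).le _))
      _ = c₂ * t * ∑ y ∈ F.filter (fun y => wordDist S 1 (x⁻¹ * y) ≤ 2 ^ m),
          md S (x⁻¹ * y) ^ (α - (N : ℝ)) := by
          rw [Finset.mul_sum]
          exact Finset.sum_congr rfl (fun y _ => by ring)
      _ = c₂ * t * ∑ g ∈ (F.filter (fun y => wordDist S 1 (x⁻¹ * y) ≤ 2 ^ m)).image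
          (fun y => x⁻¹ * y), md S g ^ (α - (N : ℝ)) := by
          rw [Finset.sum_image (fun a _ b _ hab => mul_left_cancel hab)]
      _ ≤ c₂ * t * ∑ g ∈ H.ball (2 ^ m), md S g ^ (α - (N : ℝ)) := by
          refine mul_le_mul_of_nonneg_left ?_ (by positivity)
          refine Finset.sum_le_sum_of_subset_of_nonneg ?_
            (fun g _ _ => Real.rpow_nonneg (md_pos S _).le _)
          intro g hg
          obtain ⟨y, hy, rfl⟩ := Finset.mem_image.1 hg
          rw [H.mem_ball]
          exact (Finset.mem_filter.1 hy).2
      _ ≤ c₂ * t * (cA N C₂ α * ((2 : ℝ) ^ m) ^ α) :=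
          mul_le_mul_of_nonneg_left (near_sum H K.hα K.hαN m) (by positivity)
      _ = _ := by ring
  · apply K.tail H x m _ _ f hf
    · refine le_trans (Real.rpow_le_rpow ?_ ?_ (by positivity)) hB
      · exact Finset.sum_nonneg (fun y _ => Real.rpow_nonneg (hf y) _)
      · exact Finset.sum_le_sum_of_subset_of_nonneg (Finset.filter_subset _ _)
          (fun y _ _ => Real.rpow_nonneg (hf y) _)
    · intro y hy
      exact not_le.1 (Finset.mem_filter.1 hy).2

/-- The Hardy–Littlewood–Sobolev constant. -/
def cH (N : ℕ) (C₂ α c₂ : ℝ) : ℝ := c₂ * (cA N C₂ α + cB N C₂ α * 2 ^ (((N : ℝ) - α) / 2))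

lemma Ker.point [Group G] {S : Finset G} {N : ℕ} {C₁ C₂ : ℝ} (H : Geo S N C₁ C₂) {α c₂ : ℝ}
    {R : G → G → ℝ} (K : Ker S N α c₂ R) (x : G) (F : Finset G)
    (f : G → ℝ) (hf : ∀ y, 0 ≤ f y) (B t : ℝ) (ht : 0 < t) (htB : t ≤ B) (hft : ∀ y ∈ F, f y ≤ t)
    (hB : (∑ y ∈ F, f y ^ rr N α) ^ (1 / rr N α) ≤ B) :
    (∑ y ∈ F, R x y * f y) * t ≤ cH N C₂ α c₂ * (B ^ (2 - rr N α) * t ^ rr N α) := by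
  have hα := K.hα
  have hαN := K.hαN
  have hC₂ := H.hC₂
  have hc₂ := K.hc₂
  have hN0 : (0 : ℝ) < N := hα.trans hαN
  have hNα : (0 : ℝ) < N - α := by linarith
  have hr := rr_pos K.hα K.hαN
  have hB0 : 0 < B := ht.trans_le htB
  have hcA : 0 ≤ cA N C₂ α := by have := two_rpow_gt hα; unfold cA; positivity
  have hcB : 0 ≤ cB N C₂ α := by unfold cB; positivity
  set ρ : ℝ := (B / t) ^ (rr N α / N) with hρ
  have hBt : 1 ≤ B / t := by rwa [le_div_iff₀ ht, one_mul]
  have hρ1 : 1 ≤ ρ := Real.one_le_rpow hBt (by positivity)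
  have hρ0 : 0 < ρ := by linarith
  obtain ⟨m, hm1, hm2⟩ := exists_nat_pow_near hρ1 (by norm_num : (1 : ℝ) < 2)
  have h := K.core H x m F f hf B t ht.le hft hB
  have hP : (0 : ℝ) < 2 ^ m := by positivity
  have b1 : ((2 : ℝ) ^ m) ^ α ≤ ρ ^ α := by gcongr
  have b2 : ((2 : ℝ) ^ m) ^ ((α - N) / 2) ≤ 2 ^ (((N : ℝ) - α) / 2) * ρ ^ ((α - N) / 2) := by
    calc ((2 : ℝ) ^ m) ^ ((α - N) / 2) ≤ (ρ / 2) ^ ((α - N) / 2) := by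
          refine Real.rpow_le_rpow_of_nonpos (by positivity) ?_ (by linarith)
          rw [pow_succ] at hm2
          linarith
      _ = _ := by
          rw [Real.div_rpow hρ0.le (by norm_num), div_eq_mul_inv, ← Real.rpow_neg (by norm_num),
            mul_comm]
          congr 2
          ring
  have lB : B = (B / t) * t := by field_simp
  have b3 : ρ ^ α * t * t = B ^ (2 - rr N α) * t ^ rr N α := by
    rw [hρ, ← Real.rpow_mul (by positivity), Real.div_rpow hB0.le ht.le]
    have e1 : rr N α / N * α = 2 - rr N α := by unfold rr; field_simp; ring
    rw [e1]
    have e2 : t ^ rr N α * t ^ (2 - rr N α) = t * t := by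
      rw [← Real.rpow_add ht]
      have : rr N α + (2 - rr N α) = 2 := by ring
      rw [this, Real.rpow_two, sq]
    have : t ^ (2 - rr N α) ≠ 0 := by positivity
    field_simp
    rw [sq, ← e2]
    ring
  have b4 : ρ ^ ((α - N) / 2) * B = ρ ^ α * t := by
    have e1 : B / t = ρ ^ (α - (α - N) / 2) := by
      rw [hρ, ← Real.rpow_mul (by positivity)]
      have : rr N α / N * (α - (α - N) / 2) = 1 := by unfold rr; field_simp; ring
      rw [this, Real.rpow_one]
    rw [lB, e1, ← mul_assoc, ← Real.rpow_add hρ0]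
    congr 2
    ring
  calc (∑ y ∈ F, R x y * f y) * t
      ≤ (c₂ * (cA N C₂ α * ((2 : ℝ) ^ m) ^ α * t) +
      c₂ * (cB N C₂ α * ((2 : ℝ) ^ m) ^ ((α - N) / 2) * B)) * t := by gcongr
    _ ≤ (c₂ * (cA N C₂ α * ρ ^ α * t) +
      c₂ * (cB N C₂ α * (2 ^ (((N : ℝ) - α) / 2) * ρ ^ ((α - N) / 2)) * B)) * t := by gcongr
    _ = c₂ * (cA N C₂ α * (ρ ^ α * t * t) + cB N C₂ α * 2 ^ (((N : ℝ) - α) / 2) *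
        ((ρ ^ ((α - N) / 2) * B) * t)) := by ring
    _ = cH N C₂ α c₂ * (ρ ^ α * t * t) := by rw [b4, cH]; ring
    _ = _ := by rw [b3]

lemma Ker.hls_fin [Group G] {S : Finset G} {N : ℕ} {C₁ C₂ : ℝ} (H : Geo S N C₁ C₂) {α c₂ : ℝ}
    {R : G → G → ℝ} (K : Ker S N α c₂ R) (F : Finset G) (f : G → ℝ) (hf : ∀ y, 0 ≤ f y) :
    ∑ x ∈ F, ∑ y ∈ F, R x y * f y * f x ≤
      2 * cH N C₂ α c₂ * ((∑ y ∈ F, f y ^ rr N α) ^ (1 / rr N α)) ^ 2 := by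
  classical
  have hα := K.hα
  have hαN := K.hαN
  have hC₂ := H.hC₂
  have hc₂ := K.hc₂
  have hr := rr_pos K.hα K.hαN
  have hcA : 0 ≤ cA N C₂ α := by have := two_rpow_gt hα; unfold cA; positivity
  have hcB : 0 ≤ cB N C₂ α := by unfold cB; positivity
  have hcH : 0 ≤ cH N C₂ α c₂ := by unfold cH; positivity
  set X := ∑ y ∈ F, f y ^ rr N α with hX
  have hX0 : 0 ≤ X := Finset.sum_nonneg (fun y _ => Real.rpow_nonneg (hf y) _)
  set B := X ^ (1 / rr N α) with hB
  have hB0 : 0 ≤ B := by positivity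
  have hBr : B ^ rr N α = X := by
    rw [hB, ← Real.rpow_mul hX0, one_div_mul_cancel hr.ne', Real.rpow_one]
  have hfB : ∀ x ∈ F, f x ≤ B := by
    intro x hx
    have h1 : f x ^ rr N α ≤ X :=
      Finset.single_le_sum (f := fun y => f y ^ rr N α) (fun y _ => Real.rpow_nonneg (hf y) _) hx
    rw [← hBr] at h1
    exact (Real.rpow_le_rpow_iff (hf x) hB0 hr).1 h1
  set J := ∑ x ∈ F, ∑ y ∈ F, if f y ≤ f x then R x y * f y * f x else 0 with hJ
  have sJ : ∑ x ∈ F, ∑ y ∈ F, R x y * f y * f x ≤ 2 * J := by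
    have hJ2 : J = ∑ x ∈ F, ∑ y ∈ F, if f x ≤ f y then R x y * f y * f x else 0 := by
      rw [hJ, Finset.sum_comm]
      refine Finset.sum_congr rfl (fun x _ => Finset.sum_congr rfl (fun y _ => ?_))
      rw [K.symm y x]
      congr 1
      ring
    calc _ ≤ ∑ x ∈ F, ∑ y ∈ F, ((if f y ≤ f x then R x y * f y * f x else 0) +
          (if f x ≤ f y then R x y * f y * f x else 0)) := by
          refine Finset.sum_le_sum (fun x _ => Finset.sum_le_sum (fun y _ => ?_))
          have : 0 ≤ R x y * f y * f x := mul_nonneg (mul_nonneg (K.nonneg x y) (hf y)) (hf x)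
          rcases le_total (f y) (f x) with h | h
          · rw [if_pos h]; split_ifs <;> linarith
          · rw [if_pos h]; split_ifs <;> linarith
      _ = J + J := by
          simp only [Finset.sum_add_distrib]
          rw [← hJ2]
      _ = 2 * J := by ring
  have Jle : J ≤ cH N C₂ α c₂ * (B ^ (2 - rr N α) * X) := by
    rw [hX, Finset.mul_sum, Finset.mul_sum, hJ]
    refine Finset.sum_le_sum (fun x hx => ?_)
    rcases (hf x).eq_or_lt with h0 | h0
    · rw [← h0]
      simp only [mul_zero, ite_self, Finset.sum_const_zero]
      rw [Real.zero_rpow hr.ne']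
      simp
    · have h := K.point H x (F.filter (fun y => f y ≤ f x)) f hf B (f x) h0 (hfB x hx)
        (fun y hy => (Finset.mem_filter.1 hy).2) (by
          rw [hB]
          refine Real.rpow_le_rpow ?_ ?_ (by positivity)
          · exact Finset.sum_nonneg (fun y _ => Real.rpow_nonneg (hf y) _)
          · exact Finset.sum_le_sum_of_subset_of_nonneg (Finset.filter_subset _ _)
              (fun y _ _ => Real.rpow_nonneg (hf y) _))
      rw [← Finset.sum_filter, ← Finset.sum_mul]
      exact h
  have last : B ^ (2 - rr N α) * X = B ^ 2 := by
    rcases hB0.eq_or_lt with h0 | h0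
    · rw [← hBr, ← h0, Real.zero_rpow hr.ne']; simp
    · rw [← hBr, ← Real.rpow_add h0]
      have : 2 - rr N α + rr N α = 2 := by ring
      rw [this, Real.rpow_two]
  rw [last] at Jle
  linarith



lemma tsum_split {ι : Type*} (Q : Finset ι) [DecidablePred (· ∈ Q)] (k : ι → ℝ) (hk : Summable k) :
    Summable (fun x => if x ∈ Q then 0 else k x) ∧
    ∑' x, k x = ∑ x ∈ Q, k x + ∑' x, (if x ∈ Q then 0 else k x) := by
  have s1 : Summable (fun x => if x ∈ Q then k x else 0) :=
    summable_of_ne_finset_zero (s := Q) (fun x hx => if_neg hx)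
  have s2 : Summable (fun x => if x ∈ Q then 0 else k x) := by
    have := hk.sub s1
    refine this.congr (fun x => ?_)
    by_cases h : x ∈ Q <;> simp [h]
  refine ⟨s2, ?_⟩
  have e : ∑ x ∈ Q, k x = ∑' x, (if x ∈ Q then k x else 0) := by
    rw [tsum_eq_sum (s := Q) (fun x hx => if_neg hx)]
    exact Finset.sum_congr rfl (fun x hx => (if_pos hx).symm)
  rw [e, ← s1.tsum_add s2]
  congr 1
  ext x
  by_cases h : x ∈ Q <;> simp [h]

lemma tail_aux {ι : Type*} (h : ι → ℝ) (hn : ∀ i, 0 ≤ h i) (ε : ℝ) (E : Finset ι)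
    (ht : ∀ F : Finset ι, Disjoint F E → ∑ i ∈ F, h i ≤ ε) :
    Summable h ∧ ∑ i ∈ E, h i ≤ ∑' i, h i ∧ ∑' i, h i ≤ ∑ i ∈ E, h i + ε := by
  classical
  have b : ∀ F : Finset ι, ∑ i ∈ F, h i ≤ ∑ i ∈ E, h i + ε := by
    intro F
    rw [← Finset.sum_inter_add_sum_sdiff F E]
    refine add_le_add ?_ (ht _ Finset.sdiff_disjoint)
    exact Finset.sum_le_sum_of_subset_of_nonneg Finset.inter_subset_right (fun _ _ _ => hn _)
  have s : Summable h := summable_of_sum_le hn b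
  exact ⟨s, s.sum_le_tsum E (fun _ _ => hn _), s.tsum_le_of_sum_le b⟩

lemma tendsto_tsum_unif {ι : Type*} (g : ℕ → ι → ℝ) (g' : ι → ℝ) (hn : ∀ n i, 0 ≤ g n i)
    (hlim : ∀ i, Tendsto (fun n => g n i) atTop (𝓝 (g' i)))
    (ht : ∀ ε : ℝ, 0 < ε → ∃ E : Finset ι, ∀ n, ∀ F : Finset ι, Disjoint F E →
      ∑ i ∈ F, g n i ≤ ε) :
    (∀ n, Summable (g n)) ∧ Summable g' ∧
      Tendsto (fun n => ∑' i, g n i) atTop (𝓝 (∑' i, g' i)) := by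
  have hn' : ∀ i, 0 ≤ g' i := fun i => ge_of_tendsto' (hlim i) (fun n => hn n i)
  have flim : ∀ F : Finset ι, Tendsto (fun n => ∑ i ∈ F, g n i) atTop (𝓝 (∑ i ∈ F, g' i)) :=
    fun F => tendsto_finsetSum _ (fun i _ => hlim i)
  obtain ⟨E1, hE1⟩ := ht 1 one_pos
  have tl : ∀ (ε : ℝ) (E : Finset ι), (∀ n, ∀ F : Finset ι, Disjoint F E → ∑ i ∈ F, g n i ≤ ε) →
      ∀ F : Finset ι, Disjoint F E → ∑ i ∈ F, g' i ≤ ε := by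
    intro ε E hE F hF
    exact le_of_tendsto' (flim F) (fun n => hE n F hF)
  refine ⟨fun n => (tail_aux (g n) (hn n) 1 E1 (hE1 n)).1,
    (tail_aux g' hn' 1 E1 (tl 1 E1 hE1)).1, ?_⟩
  rw [Metric.tendsto_atTop]
  intro ε hε
  obtain ⟨E, hE⟩ := ht (ε / 4) (by positivity)
  obtain ⟨n0, hn0⟩ := (Metric.tendsto_atTop.1 (flim E)) (ε / 4) (by positivity)
  refine ⟨n0, fun n hn1 => ?_⟩
  have h1 := hn0 n hn1
  have h2 := (tail_aux (g n) (hn n) _ E (hE n)).2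
  have h3 := (tail_aux g' hn' _ E (tl _ E hE)).2
  rw [Real.dist_eq, abs_lt] at *
  constructor <;> linarith [h1.1, h1.2, h2.1, h2.2, h3.1, h3.2]

/-- Nonnegative functions with `ℓ^r` norm at most `B`. -/
structure Bd (N : ℕ) (α B : ℝ) (f : G → ℝ) : Prop where
  nn : ∀ y, 0 ≤ f y
  le : ∀ F : Finset G, (∑ y ∈ F, f y ^ rr N α) ^ (1 / rr N α) ≤ B

lemma Bd.mono {N : ℕ} {α B : ℝ} (hr : 0 < rr N α) {f g : G → ℝ} (hf : Bd N α B f)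
    (hg : ∀ y, 0 ≤ g y) (hgf : ∀ y, g y ≤ f y) : Bd N α B g := by
  refine ⟨hg, fun F => le_trans ?_ (hf.le F)⟩
  refine Real.rpow_le_rpow (Finset.sum_nonneg (fun y _ => Real.rpow_nonneg (hg y) _)) ?_
    (by positivity)
  exact Finset.sum_le_sum (fun y _ => Real.rpow_le_rpow (hg y) (hgf y) hr.le)

lemma Bd.lim {N : ℕ} {α B : ℝ} (hr : 0 < rr N α) {f : ℕ → G → ℝ} {f' : G → ℝ}
    (hf : ∀ n, Bd N α B (f n))
    (hl : ∀ y, Tendsto (fun n => f n y) atTop (𝓝 (f' y))) : Bd N α B f' := by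
  refine ⟨fun y => ge_of_tendsto' (hl y) (fun n => (hf n).nn y), fun F => ?_⟩
  have hT : Tendsto (fun n => (∑ y ∈ F, f n y ^ rr N α) ^ (1 / rr N α)) atTop
      (𝓝 ((∑ y ∈ F, f' y ^ rr N α) ^ (1 / rr N α))) :=
    Tendsto.rpow_const (tendsto_finsetSum _ (fun y _ => (hl y).rpow_const (Or.inr hr.le)))
      (Or.inr (by positivity))
  exact le_of_tendsto' hT (fun n => (hf n).le F)

lemma tail_tendsto {N : ℕ} {α : ℝ} (hαN : α < N) (c : ℝ) (ε : ℝ) (hε : 0 < ε) :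
    ∃ m : ℕ, c * ((2 : ℝ) ^ m) ^ ((α - N) / 2) ≤ ε := by
  have h1 : Tendsto (fun m : ℕ => (2 : ℝ) ^ m) atTop atTop :=
    tendsto_pow_atTop_atTop_of_one_lt (by norm_num)
  have h2 := (tendsto_rpow_neg_atTop (y := (N - α) / 2) (by linarith)).comp h1
  have h3 := h2.const_mul c
  rw [mul_zero] at h3
  have h4 := h3.eventually (ge_mem_nhds hε)
  obtain ⟨m, hm⟩ := h4.exists
  refine ⟨m, ?_⟩
  have e : (α - N) / 2 = -((N - α) / 2) := by ring
  rw [e]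
  exact hm

lemma Ker.conv_lim [Group G] {S : Finset G} {N : ℕ} {C₁ C₂ : ℝ} (H : Geo S N C₁ C₂) {α c₂ : ℝ}
    {R : G → G → ℝ} (K : Ker S N α c₂ R) {B : ℝ} {f : ℕ → G → ℝ} {f' : G → ℝ}
    (hf : ∀ n, Bd N α B (f n))
    (hl : ∀ y, Tendsto (fun n => f n y) atTop (𝓝 (f' y))) (x : G) :
    (∀ n, Summable (fun y => R x y * f n y)) ∧ Summable (fun y => R x y * f' y) ∧
      Tendsto (fun n => conv R (f n) x) atTop (𝓝 (conv R f' x)) := by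
  classical
  refine tendsto_tsum_unif (fun n y => R x y * f n y) (fun y => R x y * f' y)
    (fun n y => mul_nonneg (K.nonneg x y) ((hf n).nn y)) (fun y => (hl y).const_mul _) ?_
  intro ε hε
  obtain ⟨m, hm⟩ := tail_tendsto K.hαN (c₂ * cB N C₂ α * B) ε hε
  refine ⟨(H.ball (2 ^ m)).image (fun g => x * g), fun n F hF => ?_⟩
  refine (K.tail H x m F ?_ (f n) (hf n).nn B ((hf n).le F)).trans (le_trans (le_of_eq ?_) hm)
  · intro y hy
    by_contra hcon
    refine Finset.disjoint_left.1 hF hy (Finset.mem_image.2 ⟨x⁻¹ * y, ?_, by group⟩)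
    rw [H.mem_ball]
    exact not_lt.1 hcon
  · ring

lemma Ker.conv_summable [Group G] {S : Finset G} {N : ℕ} {C₁ C₂ : ℝ} (H : Geo S N C₁ C₂)
    {α c₂ : ℝ} {R : G → G → ℝ} (K : Ker S N α c₂ R) {B : ℝ} {f : G → ℝ}
    (hf : Bd N α B f) (x : G) : Summable (fun y => R x y * f y) :=
  (K.conv_lim H (f := fun _ => f) (fun _ => hf) (fun _ => tendsto_const_nhds) x).2.1

lemma Ker.conv_nonneg [Group G] {S : Finset G} {N : ℕ}
    {α c₂ : ℝ} {R : G → G → ℝ} (K : Ker S N α c₂ R) {f : G → ℝ}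
    (hf : ∀ y, 0 ≤ f y) (x : G) : 0 ≤ conv R f x :=
  tsum_nonneg (fun y => mul_nonneg (K.nonneg x y) (hf y))

lemma cH_nonneg [Group G] {S : Finset G} {N : ℕ} {C₁ C₂ : ℝ} (H : Geo S N C₁ C₂)
    {α c₂ : ℝ} {R : G → G → ℝ} (K : Ker S N α c₂ R) : 0 ≤ cH N C₂ α c₂ := by
  have hC₂ := H.hC₂
  have hc₂ := K.hc₂
  have hcA : 0 ≤ cA N C₂ α := by have := two_rpow_gt K.hα; unfold cA; positivity
  have hcB : 0 ≤ cB N C₂ α := by unfold cB; positivity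
  unfold cH; positivity

lemma Ker.energy_bd [Group G] {S : Finset G} {N : ℕ} {C₁ C₂ : ℝ} (H : Geo S N C₁ C₂)
    {α c₂ : ℝ} {R : G → G → ℝ} (K : Ker S N α c₂ R) {B : ℝ} {f : G → ℝ}
    (hf : Bd N α B f) :
    Summable (fun x => conv R f x * f x) ∧ ∑' x, conv R f x * f x ≤ 2 * cH N C₂ α c₂ * B ^ 2 := by
  classical
  have hcH := cH_nonneg H K
  have nn : ∀ x, 0 ≤ conv R f x * f x := fun x => mul_nonneg (K.conv_nonneg hf.nn x) (hf.nn x)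
  have b : ∀ F : Finset G, ∑ x ∈ F, conv R f x * f x ≤ 2 * cH N C₂ α c₂ * B ^ 2 := by
    intro F
    have s : ∀ x ∈ F, Summable (fun y => R x y * f y * f x) :=
      fun x _ => (K.conv_summable H hf x).mul_right _
    have e : ∑ x ∈ F, conv R f x * f x = ∑' y, ∑ x ∈ F, R x y * f y * f x := by
      rw [Summable.tsum_finsetSum s]
      refine Finset.sum_congr rfl (fun x _ => ?_)
      rw [tsum_mul_right]; rfl
    rw [e]
    have t : ∀ x y, 0 ≤ R x y * f y * f x := fun x y =>
      mul_nonneg (mul_nonneg (K.nonneg x y) (hf.nn y)) (hf.nn x)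
    refine (summable_sum s).tsum_le_of_sum_le (fun F' => ?_)
    calc ∑ y ∈ F', ∑ x ∈ F, R x y * f y * f x
        ≤ ∑ y ∈ F ∪ F', ∑ x ∈ F ∪ F', R x y * f y * f x := by
          refine (Finset.sum_le_sum_of_subset_of_nonneg (Finset.subset_union_right (s₁ := F))
            (fun y _ _ => Finset.sum_nonneg (fun x _ => t x y))).trans ?_
          refine Finset.sum_le_sum (fun y _ => ?_)
          exact Finset.sum_le_sum_of_subset_of_nonneg Finset.subset_union_left
            (fun x _ _ => t x y)
      _ = ∑ x ∈ F ∪ F', ∑ y ∈ F ∪ F', R x y * f y * f x := Finset.sum_comm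
      _ ≤ _ := K.hls_fin H (F ∪ F') f hf.nn
      _ ≤ _ := by
          have h1 := hf.le (F ∪ F')
          have h2 : 0 ≤ (∑ y ∈ F ∪ F', f y ^ rr N α) ^ (1 / rr N α) :=
            Real.rpow_nonneg (Finset.sum_nonneg (fun y _ => Real.rpow_nonneg (hf.nn y) _)) _
          gcongr
  have s : Summable (fun x => conv R f x * f x) := summable_of_sum_le nn b
  exact ⟨s, s.tsum_le_of_sum_le b⟩

lemma Ker.split [Group G] {S : Finset G} {N : ℕ} {C₁ C₂ : ℝ} (H : Geo S N C₁ C₂)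
    {α c₂ : ℝ} {R : G → G → ℝ} (K : Ker S N α c₂ R) {B : ℝ} {f : G → ℝ}
    (hf : Bd N α B f) (Q : Finset G) [DecidablePred (· ∈ Q)] (g : G → ℝ)
    (hg : ∀ y, g y = if y ∈ Q then 0 else f y) :
    Bd N α B g ∧ ∑' x, conv R f x * f x = ∑' x, conv R g x * g x +
      (∑ x ∈ Q, conv R f x * f x + ∑ x ∈ Q, conv R g x * f x) := by
  have hr := rr_pos K.hα K.hαN
  have g0 : ∀ y, 0 ≤ g y := by
    intro y; rw [hg]; split_ifs
    · exact le_rfl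
    · exact hf.nn y
  have gf : ∀ y, g y ≤ f y := by
    intro y; rw [hg]; split_ifs
    · exact hf.nn y
    · exact le_rfl
  have hgB : Bd N α B g := hf.mono hr g0 gf
  refine ⟨hgB, ?_⟩
  obtain ⟨sf, -⟩ := K.energy_bd H hf
  have cgf : ∀ x, conv R g x ≤ conv R f x := fun x =>
    (K.conv_summable H hgB x).tsum_le_tsum
      (fun y => mul_le_mul_of_nonneg_left (gf y) (K.nonneg x y)) (K.conv_summable H hf x)
  have sgf : Summable (fun x => conv R g x * f x) :=
    Summable.of_nonneg_of_le (fun x => mul_nonneg (K.conv_nonneg g0 x) (hf.nn x))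
      (fun x => mul_le_mul_of_nonneg_right (cgf x) (hf.nn x)) sf
  have sfg : Summable (fun x => conv R f x * g x) :=
    Summable.of_nonneg_of_le (fun x => mul_nonneg (K.conv_nonneg hf.nn x) (g0 x))
      (fun x => mul_le_mul_of_nonneg_left (gf x) (K.conv_nonneg hf.nn x)) sf
  have e1 := (tsum_split Q _ sf).2
  have e2 := (tsum_split Q _ sgf).2
  have e1' : ∀ x, (if x ∈ Q then 0 else conv R f x * f x) = conv R f x * g x := by
    intro x; rw [hg]; split_ifs <;> simp
  have e2' : ∀ x, (if x ∈ Q then 0 else conv R g x * f x) = conv R g x * g x := by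
    intro x; rw [hg x]; split_ifs <;> simp
  simp only [e1'] at e1
  simp only [e2'] at e2
  have fub : ∑' x, conv R f x * g x = ∑' x, conv R g x * f x := by
    have sp : Summable (Function.uncurry (fun x y => R x y * f y * g x)) := by
      have h1 : ∀ x, Summable (fun y => R x y * f y * g x) :=
        fun x => (K.conv_summable H hf x).mul_right (g x)
      have h2 : Summable (fun x => ∑' y, R x y * f y * g x) := by
        refine sfg.congr (fun x => ?_)
        rw [tsum_mul_right]; rfl
      refine (summable_prod_of_nonneg ?_).2 ⟨h1, h2⟩
      intro z
      exact mul_nonneg (mul_nonneg (K.nonneg z.1 z.2) (hf.nn z.2)) (g0 z.1)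
    have h := sp.tsum_comm
    have l : ∀ x, ∑' y, R x y * f y * g x = conv R f x * g x := fun x => by
      rw [tsum_mul_right]; rfl
    have r : ∀ y, ∑' x, R x y * f y * g x = conv R g y * f y := fun y => by
      rw [conv, ← tsum_mul_right]
      refine tsum_congr (fun x => ?_)
      rw [K.symm y x]; ring
    simp only [l, r] at h
    exact h.symm
  rw [e1, fub, e2]
  ring

/-- The `ℓ^r` bound of `|w|^p` in terms of the Dirichlet energy. -/
def bB (N : ℕ) (C₁ p D : ℝ) : ℝ :=
  (sobC N C₁ * D ^ ((N : ℝ) / ((N : ℝ) - 2))) ^ (p / (2 * (N : ℝ) / ((N : ℝ) - 2)))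

lemma Geo.pt_bd [Group G] {S : Finset G} {N : ℕ} {C₁ C₂ : ℝ} (H : Geo S N C₁ C₂)
    {w : G → ℝ} (hw : MemD12 S N w) {D : ℝ} (hD : ∑' x, gradSq S w x ≤ D) (E : Finset G) :
    ∑ x ∈ E, |w x| ^ (2 * (N : ℝ) / ((N : ℝ) - 2)) ≤
      sobC N C₁ * D ^ ((N : ℝ) / ((N : ℝ) - 2)) := by
  have hN3 : (3 : ℝ) ≤ N := by exact_mod_cast H.hN
  have hN2 : (0 : ℝ) < (N : ℝ) - 2 := by linarith
  refine (H.sobolev_sum w hw E).trans ?_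
  have := H.sobC_pos
  have : 0 ≤ ∑' x, gradSq S w x := tsum_nonneg (gradSq_nonneg S w)
  gcongr

lemma Geo.bd [Group G] {S : Finset G} {N : ℕ} {C₁ C₂ : ℝ} (H : Geo S N C₁ C₂) {α p : ℝ}
    (hα : 0 < α) (hαN : α < N) (hp : ((N : ℝ) + α) / ((N : ℝ) - 2) ≤ p)
    {w : G → ℝ} (hw : MemD12 S N w) {D : ℝ} (hD : ∑' x, gradSq S w x ≤ D) :
    Bd N α (bB N C₁ p D) (fun y => |w y| ^ p) := by
  have hN3 : (3 : ℝ) ≤ N := by exact_mod_cast H.hN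
  have hN2 : (0 : ℝ) < (N : ℝ) - 2 := by linarith
  have hr := rr_pos hα hαN
  have hD0 : 0 ≤ D := le_trans (tsum_nonneg (gradSq_nonneg S w)) hD
  have hs := H.sobC_pos
  refine ⟨fun y => Real.rpow_nonneg (abs_nonneg _) _, fun F => ?_⟩
  have hX := H.pt_bd hw hD
  unfold bB
  set X := sobC N C₁ * D ^ ((N : ℝ) / ((N : ℝ) - 2)) with hXd
  have hX0 : 0 ≤ X := by positivity
  set q := 2 * (N : ℝ) / ((N : ℝ) - 2) with hq
  have hq0 : 0 < q := by positivity
  have hp0 : 0 < p := lt_of_lt_of_le (by positivity) hp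
  have hpr : q ≤ p * rr N α := by
    unfold rr
    rw [div_le_iff₀ hN2] at hp
    rw [hq, div_le_iff₀ hN2, mul_div_assoc', div_mul_eq_mul_div, le_div_iff₀ (by linarith)]
    nlinarith
  have key : ∀ y ∈ F, (|w y| ^ p) ^ rr N α ≤ |w y| ^ q * X ^ ((p * rr N α - q) / q) := by
    intro y _
    rw [← Real.rpow_mul (abs_nonneg _)]
    rcases (abs_nonneg (w y)).eq_or_lt with h0 | h0
    · rw [← h0, Real.zero_rpow (by positivity), Real.zero_rpow hq0.ne', zero_mul]
    · have h1 : |w y| ^ q ≤ X := by simpa using hX {y}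
      have e : p * rr N α = q + q * ((p * rr N α - q) / q) := by field_simp; ring
      rw [e, Real.rpow_add h0, Real.rpow_mul h0.le, ← e]
      have : 0 ≤ (p * rr N α - q) / q := div_nonneg (by linarith) hq0.le
      gcongr
  have tot : ∑ y ∈ F, (|w y| ^ p) ^ rr N α ≤ X ^ (p * rr N α / q) := by
    refine (Finset.sum_le_sum key).trans ?_
    rw [← Finset.sum_mul]
    rcases hX0.eq_or_lt with h0 | h0
    · have h1 : ∑ y ∈ F, |w y| ^ q ≤ 0 := by rw [h0]; exact hX F
      have h2 : 0 ≤ ∑ y ∈ F, |w y| ^ q :=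
        Finset.sum_nonneg (fun y _ => Real.rpow_nonneg (abs_nonneg _) _)
      rw [le_antisymm h1 h2, zero_mul]
      positivity
    · calc _ ≤ X * X ^ ((p * rr N α - q) / q) := by gcongr; exact hX F
        _ = X ^ (1 + (p * rr N α - q) / q) := by rw [Real.rpow_add h0, Real.rpow_one]
        _ = _ := by congr 1; field_simp; ring
  refine (Real.rpow_le_rpow (Finset.sum_nonneg (fun y _ => Real.rpow_nonneg
    (Real.rpow_nonneg (abs_nonneg _) _) _)) tot (by positivity)).trans (le_of_eq ?_)
  rw [← Real.rpow_mul hX0]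
  congr 1
  field_simp

lemma gradSq_smul [Group G] (S : Finset G) (c : ℝ) (w : G → ℝ) (x : G) :
    gradSq S (fun y => c * w y) x = c ^ 2 * gradSq S w x := by
  unfold gradSq
  rw [Finset.mul_sum]
  exact Finset.sum_congr rfl (fun s _ => by ring)

lemma energy_smul (R : G → G → ℝ) (p c : ℝ) (hc : 0 ≤ c) (w : G → ℝ) :
    energy R p (fun y => c * w y) = (c ^ p * c ^ p) * energy R p w := by
  unfold energy
  rw [← tsum_mul_left]
  refine tsum_congr (fun x => ?_)
  have e : ∀ y, |c * w y| ^ p = c ^ p * |w y| ^ p := fun y => by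
    rw [abs_mul, abs_of_nonneg hc, Real.mul_rpow hc (abs_nonneg _)]
  have e2 : conv R (fun y => |c * w y| ^ p) x = c ^ p * conv R (fun y => |w y| ^ p) x := by
    unfold conv
    rw [← tsum_mul_left]
    refine tsum_congr (fun y => ?_)
    show R x y * |c * w y| ^ p = c ^ p * (R x y * |w y| ^ p)
    rw [e]; ring
  rw [e2, e]
  ring

lemma D12Norm_sq [Group G] (S : Finset G) (w : G → ℝ) :
    D12Norm S w ^ 2 = ∑' x, gradSq S w x := by
  unfold D12Norm
  rw [← Real.sqrt_eq_rpow, Real.sq_sqrt (tsum_nonneg (gradSq_nonneg S w))]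

lemma energy_le_K [Group G] {S : Finset G} {N : ℕ} {C₁ C₂ : ℝ} (H : Geo S N C₁ C₂)
    {α c₂ p : ℝ} {R : G → G → ℝ} (K : Ker S N α c₂ R) (hp : ((N : ℝ) + α) / ((N : ℝ) - 2) ≤ p)
    (w : G → ℝ) (hw : MemD12 S N w) :
    energy R p w ≤ bestK S N R p * (∑' x, gradSq S w x) ^ p := by
  have hN3 : (3 : ℝ) ≤ N := by exact_mod_cast H.hN
  have hN2 : (0 : ℝ) < (N : ℝ) - 2 := by linarith
  have hα := K.hα
  have hp0 : 0 < p := lt_of_lt_of_le (by positivity) hp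
  have hbdd : BddAbove {t : ℝ | ∃ u : G → ℝ, MemD12 S N u ∧ D12Norm S u = 1 ∧ t = energy R p u} := by
    refine ⟨2 * cH N C₂ α c₂ * (bB N C₁ p 1) ^ 2, ?_⟩
    rintro t ⟨u, hu, hu1, rfl⟩
    have hD : ∑' x, gradSq S u x ≤ 1 := by rw [← D12Norm_sq, hu1]; norm_num
    exact (K.energy_bd H (H.bd K.hα K.hαN hp hu hD)).2
  set D := ∑' x, gradSq S w x with hD
  have hD0 : 0 ≤ D := tsum_nonneg (gradSq_nonneg S w)
  rcases hD0.eq_or_lt with h0 | h0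
  · have h := (K.energy_bd H (H.bd K.hα K.hαN hp hw (D := 0) (by rw [← hD, ← h0]))).2
    rw [← h0, Real.zero_rpow hp0.ne', mul_zero]
    refine h.trans (le_of_eq ?_)
    unfold bB
    rw [Real.zero_rpow (by positivity), mul_zero, Real.zero_rpow (by positivity)]
    ring
  · set c : ℝ := (Real.sqrt D)⁻¹ with hc
    have hsq : 0 < Real.sqrt D := Real.sqrt_pos.2 h0
    have hc0 : 0 < c := by positivity
    have hc2 : c ^ 2 = D⁻¹ := by rw [hc, inv_pow, Real.sq_sqrt hD0]
    have hmem : MemD12 S N (fun y => c * w y) := by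
      constructor
      · refine (hw.1.mul_left (c ^ (2 * (N : ℝ) / ((N : ℝ) - 2)))).congr (fun x => ?_)
        rw [abs_mul, abs_of_pos hc0, Real.mul_rpow hc0.le (abs_nonneg _)]
      · refine (hw.2.mul_left (c ^ 2)).congr (fun x => ?_)
        rw [gradSq_smul]
    have hn : D12Norm S (fun y => c * w y) = 1 := by
      unfold D12Norm
      simp only [gradSq_smul]
      rw [tsum_mul_left, hc2, ← hD, inv_mul_cancel₀ h0.ne', Real.one_rpow]
    have hle := le_csSup hbdd ⟨_, hmem, hn, rfl⟩
    rw [energy_smul R p c hc0.le] at hle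
    have e : c ^ p * c ^ p = (D ^ p)⁻¹ := by
      rw [← Real.mul_rpow hc0.le hc0.le, ← sq, hc2, Real.inv_rpow hD0]
    rw [e] at hle
    have hDp : 0 < D ^ p := by positivity
    rw [inv_mul_le_iff₀ hDp] at hle
    rw [mul_comm]
    exact hle



/-- Smooth cut-off at scale `r + 1`. -/
def psi [Group G] (S : Finset G) (r : ℕ) (x : G) : ℝ :=
  min (max (((wordDist S 1 x : ℝ) - (r + 1)) / (r + 1)) 0) 1

lemma psi_nonneg [Group G] (S : Finset G) (r : ℕ) (x : G) : 0 ≤ psi S r x :=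
  le_min (le_max_right _ _) zero_le_one

lemma psi_le_one [Group G] (S : Finset G) (r : ℕ) (x : G) : psi S r x ≤ 1 := min_le_right _ _

lemma psi_zero [Group G] (S : Finset G) (r : ℕ) (x : G) (h : wordDist S 1 x ≤ r + 1) :
    psi S r x = 0 := by
  unfold psi
  have h' : (wordDist S 1 x : ℝ) ≤ r + 1 := by exact_mod_cast h
  rw [max_eq_right, min_eq_left zero_le_one]
  exact div_nonpos_of_nonpos_of_nonneg (by linarith) (by positivity)

lemma psi_one [Group G] (S : Finset G) (r : ℕ) (x : G) (h : 2 * (r + 1) ≤ wordDist S 1 x) :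
    psi S r x = 1 := by
  unfold psi
  have h' : 2 * ((r : ℝ) + 1) ≤ (wordDist S 1 x : ℝ) := by exact_mod_cast h
  refine min_eq_right (le_max_of_le_left ?_)
  rw [le_div_iff₀ (by positivity)]
  linarith

lemma clamp_lip (a b : ℝ) : |min (max a 0) 1 - min (max b 0) 1| ≤ |a - b| := by
  have h1 := abs_min_sub_min_le_max (max a 0) 1 (max b 0) 1
  have h2 := abs_max_sub_max_le_max a 0 b 0
  simp only [sub_self, abs_zero] at h1 h2
  rw [max_eq_left (abs_nonneg (max a 0 - max b 0))] at h1
  rw [max_eq_left (abs_nonneg (a - b))] at h2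
  exact h1.trans h2

lemma Geo.psi_lip [Group G] {S : Finset G} {N : ℕ} {C₁ C₂ : ℝ} (H : Geo S N C₁ C₂) (r : ℕ)
    (x s : G) (hs : s ∈ S) : (psi S r (x * s) - psi S r x) ^ 2 ≤ (((r : ℝ) + 1) ^ 2)⁻¹ := by
  have h1 : (wordDist S 1 (x * s) : ℝ) ≤ wordDist S 1 x + 1 := by
    exact_mod_cast H.mul_le x s hs
  have h2 : (wordDist S 1 x : ℝ) ≤ wordDist S 1 (x * s) + 1 := by
    exact_mod_cast H.le_mul x s hs
  have hr : (0 : ℝ) < r + 1 := by positivity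
  have h3 : |psi S r (x * s) - psi S r x| ≤ ((r : ℝ) + 1)⁻¹ := by
    refine (clamp_lip _ _).trans ?_
    rw [← sub_div, abs_div, abs_of_pos hr, div_eq_mul_inv]
    refine mul_le_of_le_one_left (by positivity) ?_
    rw [abs_le]; constructor <;> linarith
  rw [← sq_abs, ← inv_pow]
  exact pow_le_pow_left₀ (abs_nonneg _) h3 2

lemma young (ε a b : ℝ) (hε : 0 < ε) : (a + b) ^ 2 ≤ (1 + ε) * a ^ 2 + (1 + 1 / ε) * b ^ 2 := by
  have h : (1 + ε) * a ^ 2 + (1 + 1 / ε) * b ^ 2 - (a + b) ^ 2 = (ε * a - b) ^ 2 / ε := by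
    field_simp; ring
  have : 0 ≤ (ε * a - b) ^ 2 / ε := by positivity
  linarith

/-- The annulus where the cut-off varies. -/
def Geo.an [Group G] {S : Finset G} {N : ℕ} {C₁ C₂ : ℝ} (H : Geo S N C₁ C₂) (r : ℕ) : Finset G := by
  classical exact H.ball (2 * (r + 1)) \ H.ball r

lemma Geo.mem_an [Group G] {S : Finset G} {N : ℕ} {C₁ C₂ : ℝ} (H : Geo S N C₁ C₂) (r : ℕ) (x : G) :
    x ∈ H.an r ↔ wordDist S 1 x ≤ 2 * (r + 1) ∧ r < wordDist S 1 x := by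
  classical
  unfold Geo.an
  rw [Finset.mem_sdiff, H.mem_ball, H.mem_ball, not_le]

open Classical in
lemma Geo.grad_cut [Group G] {S : Finset G} {N : ℕ} {C₁ C₂ : ℝ} (H : Geo S N C₁ C₂) (r : ℕ)
    (u : G → ℝ) (ε : ℝ) (hε : 0 < ε) (x : G) :
    gradSq S (fun y => psi S r y * u y) x ≤
      (1 + ε) * (if x ∈ H.ball r then 0 else gradSq S u x) +
      (1 + 1 / ε) * S.card * (((r : ℝ) + 1) ^ 2)⁻¹ * (if x ∈ H.an r then u x ^ 2 else 0) := by
  have hg := gradSq_nonneg S u x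
  have hc : 0 ≤ (1 + 1 / ε) * S.card * (((r : ℝ) + 1) ^ 2)⁻¹ := by positivity
  by_cases h1 : x ∈ H.ball r
  · have h1' := (H.mem_ball r x).1 h1
    have h2 : x ∉ H.an r := by rw [H.mem_an]; omega
    rw [if_pos h1, if_neg h2, mul_zero, mul_zero, add_zero]
    refine le_of_eq (Finset.sum_eq_zero (fun s hs => ?_))
    have h3 := H.mul_le x s hs
    simp only
    rw [psi_zero S r x (by omega), psi_zero S r (x * s) (by omega)]
    ring
  · have h1' : r < wordDist S 1 x := by
      by_contra hcon
      exact h1 ((H.mem_ball r x).2 (not_lt.1 hcon))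
    rw [if_neg h1]
    by_cases h2 : x ∈ H.an r
    · rw [if_pos h2]
      have e : (1 + ε) * gradSq S u x + (1 + 1 / ε) * S.card * (((r : ℝ) + 1) ^ 2)⁻¹ * u x ^ 2 =
          ∑ s ∈ S, ((1 + ε) * (u (x * s) - u x) ^ 2 +
            (1 + 1 / ε) * ((((r : ℝ) + 1) ^ 2)⁻¹ * u x ^ 2)) := by
        rw [Finset.sum_add_distrib, Finset.sum_const, ← Finset.mul_sum, nsmul_eq_mul]
        unfold gradSq
        ring
      rw [e]
      refine Finset.sum_le_sum (fun s hs => ?_)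
      have e2 : psi S r (x * s) * u (x * s) - psi S r x * u x =
          psi S r (x * s) * (u (x * s) - u x) + (psi S r (x * s) - psi S r x) * u x := by ring
      simp only
      rw [e2]
      refine (young ε _ _ hε).trans ?_
      rw [mul_pow, mul_pow]
      have a1 : psi S r (x * s) ^ 2 ≤ 1 :=
        pow_le_one₀ (psi_nonneg S r _) (psi_le_one S r _)
      have a2 := H.psi_lip r x s hs
      have b1 : psi S r (x * s) ^ 2 * (u (x * s) - u x) ^ 2 ≤ (u (x * s) - u x) ^ 2 :=
        mul_le_of_le_one_left (sq_nonneg _) a1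
      have b2 := mul_le_mul_of_nonneg_right a2 (sq_nonneg (u x))
      exact add_le_add (mul_le_mul_of_nonneg_left b1 (by positivity))
        (mul_le_mul_of_nonneg_left b2 (by positivity))
    · rw [if_neg h2, mul_zero, add_zero]
      have h3 : 2 * (r + 1) < wordDist S 1 x := by
        rw [H.mem_an] at h2
        by_contra hcon
        exact h2 ⟨by omega, h1'⟩
      have e : gradSq S (fun y => psi S r y * u y) x = gradSq S u x := by
        refine Finset.sum_congr rfl (fun s hs => ?_)
        have := H.le_mul x s hs
        simp only
        rw [psi_one S r x (by omega), psi_one S r (x * s) (by omega), one_mul, one_mul]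
      rw [e]
      nlinarith

/-- Bound for the Dirichlet energy of the cut-off function. -/
def Geo.T [Group G] {S : Finset G} {N : ℕ} {C₁ C₂ : ℝ} (H : Geo S N C₁ C₂) (r : ℕ)
    (ε : ℝ) (D : ℝ) (u : G → ℝ) : ℝ :=
  (1 + ε) * (D - ∑ x ∈ H.ball r, gradSq S u x) +
    (1 + 1 / ε) * S.card * ((((r : ℝ) + 1) ^ 2)⁻¹ * ∑ x ∈ H.an r, u x ^ 2)

lemma Geo.cut_mem [Group G] {S : Finset G} {N : ℕ} {C₁ C₂ : ℝ} (H : Geo S N C₁ C₂) (r : ℕ)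
    (u : G → ℝ) (hu : MemD12 S N u) (ε : ℝ) (hε : 0 < ε) :
    MemD12 S N (fun y => psi S r y * u y) ∧
    ∑' x, gradSq S (fun y => psi S r y * u y) x ≤ H.T r ε (∑' x, gradSq S u x) u := by
  classical
  have hN3 : (3 : ℝ) ≤ N := by exact_mod_cast H.hN
  have hN2 : (0 : ℝ) < (N : ℝ) - 2 := by linarith
  obtain ⟨s1, e1⟩ := tsum_split (H.ball r) (gradSq S u) hu.2
  have s2 : Summable (fun x => if x ∈ H.an r then u x ^ 2 else 0) :=
    summable_of_ne_finset_zero (s := H.an r) (fun x hx => if_neg hx)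
  have e2 : ∑' x, (if x ∈ H.an r then u x ^ 2 else 0) = ∑ x ∈ H.an r, u x ^ 2 := by
    rw [tsum_eq_sum (s := H.an r) (fun x hx => if_neg hx)]
    exact Finset.sum_congr rfl (fun x hx => if_pos hx)
  have s3 := (s1.mul_left (1 + ε)).add
    (s2.mul_left ((1 + 1 / ε) * S.card * (((r : ℝ) + 1) ^ 2)⁻¹))
  have s4 : Summable (gradSq S (fun y => psi S r y * u y)) :=
    Summable.of_nonneg_of_le (gradSq_nonneg S _) (H.grad_cut r u ε hε) s3
  refine ⟨⟨?_, s4⟩, ?_⟩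
  · refine Summable.of_nonneg_of_le (fun x => Real.rpow_nonneg (abs_nonneg _) _)
      (fun x => ?_) hu.1
    refine Real.rpow_le_rpow (abs_nonneg _) ?_ (by positivity)
    rw [abs_mul, abs_of_nonneg (psi_nonneg S r x)]
    exact mul_le_of_le_one_left (abs_nonneg _) (psi_le_one S r x)
  · refine (s4.tsum_le_tsum (H.grad_cut r u ε hε) s3).trans (le_of_eq ?_)
    rw [(s1.mul_left (1 + ε)).tsum_add
      (s2.mul_left ((1 + 1 / ε) * S.card * (((r : ℝ) + 1) ^ 2)⁻¹)), tsum_mul_left, tsum_mul_left,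
      e2]
    unfold Geo.T
    rw [e1]
    ring

lemma Geo.ball_atTop [Group G] {S : Finset G} {N : ℕ} {C₁ C₂ : ℝ} (H : Geo S N C₁ C₂) :
    Tendsto H.ball atTop atTop := by
  refine tendsto_atTop_finset_of_monotone ?_ (fun x => ⟨wordDist S 1 x, (H.mem_ball _ _).2 le_rfl⟩)
  intro m n h x hx
  rw [H.mem_ball] at *
  exact hx.trans h

lemma Geo.ball_sum [Group G] {S : Finset G} {N : ℕ} {C₁ C₂ : ℝ} (H : Geo S N C₁ C₂)
    (k : G → ℝ) (hk : Summable k) :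
    Tendsto (fun r => ∑ x ∈ H.ball r, k x) atTop (𝓝 (∑' x, k x)) :=
  hk.hasSum.comp H.ball_atTop

lemma Geo.an_lim [Group G] {S : Finset G} {N : ℕ} {C₁ C₂ : ℝ} (H : Geo S N C₁ C₂)
    (v : G → ℝ) (hv : Memlp (2 * (N : ℝ) / ((N : ℝ) - 2)) v) :
    Tendsto (fun r : ℕ => (((r : ℝ) + 1) ^ 2)⁻¹ * ∑ x ∈ H.an r, v x ^ 2) atTop (𝓝 0) := by
  classical
  have hN3 : (3 : ℝ) ≤ N := by exact_mod_cast H.hN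
  have hN2 : (0 : ℝ) < (N : ℝ) - 2 := by linarith
  have hC₂ := H.hC₂
  set q := 2 * (N : ℝ) / ((N : ℝ) - 2) with hq
  have nn : ∀ x, 0 ≤ |v x| ^ q := fun x => Real.rpow_nonneg (abs_nonneg _) _
  have t1 : Tendsto (fun r => ∑' x, |v x| ^ q - ∑ x ∈ H.ball r, |v x| ^ q) atTop (𝓝 0) := by
    have := (H.ball_sum _ hv).const_sub (∑' x, |v x| ^ q)
    rwa [sub_self] at this
  have t2 : Tendsto (fun r => 4 * C₂ ^ (2 / (N : ℝ)) *
      (∑' x, |v x| ^ q - ∑ x ∈ H.ball r, |v x| ^ q) ^ (((N : ℝ) - 2) / N)) atTop (𝓝 0) := by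
    have h0 : (0 : ℝ) < ((N : ℝ) - 2) / N := by positivity
    have := (t1.rpow_const (Or.inr h0.le) (p := ((N : ℝ) - 2) / N)).const_mul
      (4 * C₂ ^ (2 / (N : ℝ)))
    rwa [Real.zero_rpow h0.ne', mul_zero] at this
  refine squeeze_zero (fun r => ?_) (fun r => ?_) t2
  · exact mul_nonneg (by positivity) (Finset.sum_nonneg (fun x _ => sq_nonneg _))
  · have hconj : ((N : ℝ) / ((N : ℝ) - 2)).HolderConjugate ((N : ℝ) / 2) := by
      rw [Real.holderConjugate_iff]
      constructor
      · rw [lt_div_iff₀ hN2]; linarith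
      · field_simp; ring
    have h1 := Real.inner_le_Lp_mul_Lq_of_nonneg (H.an r) hconj (f := fun x => v x ^ 2)
      (g := fun _ => 1) (fun x _ => sq_nonneg _) (fun _ _ => zero_le_one)
    simp only [mul_one, Real.one_rpow, Finset.sum_const, nsmul_eq_mul, one_div_div] at h1
    have e1 : ∀ x, (v x ^ 2) ^ ((N : ℝ) / ((N : ℝ) - 2)) = |v x| ^ q := by
      intro x
      rw [← sq_abs, ← Real.rpow_natCast, ← Real.rpow_mul (abs_nonneg _)]
      congr 1
      rw [hq]; push_cast; ring
    simp only [e1] at h1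
    have h2 : ∑ x ∈ H.an r, |v x| ^ q ≤ ∑' x, |v x| ^ q - ∑ x ∈ H.ball r, |v x| ^ q := by
      have hd : Disjoint (H.an r) (H.ball r) := Finset.sdiff_disjoint
      have := hv.sum_le_tsum (H.an r ∪ H.ball r) (fun x _ => nn x)
      rw [Finset.sum_union hd] at this
      linarith
    have h3 : ((H.an r).card : ℝ) ^ (2 / (N : ℝ)) ≤
        C₂ ^ (2 / (N : ℝ)) * (4 * ((r : ℝ) + 1) ^ 2) := by
      have c1 : ((H.an r).card : ℝ) ≤ C₂ * (2 * ((r : ℝ) + 1)) ^ N := by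
        have a : ((H.an r).card : ℝ) ≤ (H.ball (2 * (r + 1))).card := by
          exact_mod_cast Finset.card_le_card Finset.sdiff_subset
        have b := (H.card_ball (2 * (r + 1)) (by omega)).2
        push_cast at b
        exact a.trans b
      have c2 := Real.rpow_le_rpow (Nat.cast_nonneg _) c1 (z := 2 / (N : ℝ)) (by positivity)
      refine c2.trans (le_of_eq ?_)
      rw [Real.mul_rpow hC₂.le (by positivity), ← Real.rpow_natCast, ← Real.rpow_mul (by positivity)]
      have e : (N : ℝ) * (2 / N) = ((2 : ℕ) : ℝ) := by push_cast; field_simp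
      rw [e, Real.rpow_natCast]
      ring
    have hr : (0 : ℝ) < ((r : ℝ) + 1) ^ 2 := by positivity
    rw [inv_mul_le_iff₀ hr]
    refine h1.trans ?_
    have h4 : (∑ x ∈ H.an r, |v x| ^ q) ^ (((N : ℝ) - 2) / N) ≤
        (∑' x, |v x| ^ q - ∑ x ∈ H.ball r, |v x| ^ q) ^ (((N : ℝ) - 2) / N) :=
      Real.rpow_le_rpow (Finset.sum_nonneg (fun x _ => nn x)) h2 (by positivity)
    refine (mul_le_mul h4 h3 (by positivity) ?_).trans (le_of_eq (by ring))
    exact Real.rpow_nonneg ((Finset.sum_nonneg (fun x _ => nn x)).trans h2) _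


lemma Ker.energy_mono [Group G] {S : Finset G} {N : ℕ} {C₁ C₂ : ℝ} (H : Geo S N C₁ C₂)
    {α c₂ : ℝ} {R : G → G → ℝ} (K : Ker S N α c₂ R) {B : ℝ} {f g : G → ℝ}
    (hf : Bd N α B f) (g0 : ∀ y, 0 ≤ g y) (gf : ∀ y, g y ≤ f y) :
    ∑' x, conv R g x * g x ≤ ∑' x, conv R f x * f x := by
  have hgB : Bd N α B g := hf.mono (rr_pos K.hα K.hαN) g0 gf
  refine (K.energy_bd H hgB).1.tsum_le_tsum (fun x => ?_) (K.energy_bd H hf).1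
  have h : conv R g x ≤ conv R f x :=
    (K.conv_summable H hgB x).tsum_le_tsum
      (fun y => mul_le_mul_of_nonneg_left (gf y) (K.nonneg x y)) (K.conv_summable H hf x)
  exact mul_le_mul h (gf x) (g0 x) (K.conv_nonneg hf.nn x)

lemma bestK_nonneg [Group G] {S : Finset G} {N : ℕ} {α c₂ : ℝ} {R : G → G → ℝ}
    (K : Ker S N α c₂ R) (p : ℝ) : 0 ≤ bestK S N R p := by
  refine Real.sSup_nonneg ?_
  rintro t ⟨u, -, -, rfl⟩
  exact tsum_nonneg (fun x => mul_nonneg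
    (K.conv_nonneg (fun y => Real.rpow_nonneg (abs_nonneg _) _) x)
    (Real.rpow_nonneg (abs_nonneg _) _))

lemma nu_le_fin [Group G] {S : Finset G} {N : ℕ} {C₁ C₂ : ℝ} (H : Geo S N C₁ C₂)
    {α c₂ p : ℝ} {R : G → G → ℝ} (K : Ker S N α c₂ R) (hp : ((N : ℝ) + α) / ((N : ℝ) - 2) ≤ p)
    (u : ℕ → G → ℝ) (D : ℝ) (hu : ∀ n, MemD12 S N (u n))
    (hD : ∀ n, ∑' x, gradSq S (u n) x ≤ D) (v : G → ℝ) 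
    (hl : ∀ x, Tendsto (fun n => u n x) atTop (𝓝 (v x))) (A E : ℝ)
    (hA : Tendsto (fun n => ∑' x, gradSq S (u n) x) atTop (𝓝 A))
    (hE : Tendsto (fun n => energy R p (u n)) atTop (𝓝 E)) (r : ℕ) (ε : ℝ) (hε : 0 < ε) :
    E - energy R p v ≤ bestK S N R p * (H.T r ε A v) ^ p := by
  classical
  have hN3 : (3 : ℝ) ≤ N := by exact_mod_cast H.hN
  have hN2 : (0 : ℝ) < (N : ℝ) - 2 := by linarith
  have hα := K.hα
  have hp0 : 0 < p := lt_of_lt_of_le (by positivity) hp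
  have hK := bestK_nonneg K (N := N) p
  have hr := rr_pos K.hα K.hαN
  obtain ⟨B, hBd⟩ : ∃ B, B = bB N C₁ p D := ⟨_, rfl⟩
  have hfB : ∀ n, Bd N α B (fun y => |u n y| ^ p) := fun n => by
    rw [hBd]; exact H.bd K.hα K.hαN hp (hu n) (hD n)
  have hfl : ∀ y, Tendsto (fun n => |u n y| ^ p) atTop (𝓝 (|v y| ^ p)) := fun y =>
    ((hl y).abs).rpow_const (Or.inr hp0.le)
  have hvB : Bd N α B (fun y => |v y| ^ p) := Bd.lim hr hfB hfl
  let Q := H.ball (2 * (r + 1))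
  let g : ℕ → G → ℝ := fun n y => if y ∈ Q then 0 else |u n y| ^ p
  let g' : G → ℝ := fun y => if y ∈ Q then 0 else |v y| ^ p
  have hs := fun n => K.split H (hfB n) Q (g n) (fun _ => rfl)
  have hs' := K.split H hvB Q g' (fun _ => rfl)
  have hgl : ∀ y, Tendsto (fun n => g n y) atTop (𝓝 (g' y)) := by
    intro y
    by_cases h : y ∈ Q
    · simp only [g, g', if_pos h]; exact tendsto_const_nhds
    · simp only [g, g', if_neg h]; exact hfl y
  have g0 : ∀ n y, 0 ≤ g n y := fun n => (hs n).1.nn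
  -- the inequality for each n
  have ineq : ∀ n, energy R p (u n) ≤
      bestK S N R p * (H.T r ε (∑' x, gradSq S (u n) x) (u n)) ^ p +
      (∑ x ∈ Q, conv R (fun y => |u n y| ^ p) x * |u n x| ^ p +
        ∑ x ∈ Q, conv R (g n) x * |u n x| ^ p) := by
    intro n
    obtain ⟨wm, wT⟩ := H.cut_mem r (u n) (hu n) ε hε
    have e1 : energy R p (u n) = _ := (hs n).2
    rw [e1]
    refine add_le_add ?_ le_rfl
    have h1 : ∑' x, conv R (g n) x * g n x ≤ energy R p (fun y => psi S r y * u n y) := by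
      refine K.energy_mono H (H.bd K.hα K.hαN hp wm le_rfl) (g0 n) (fun y => ?_)
      simp only [g]
      split_ifs with h
      · exact Real.rpow_nonneg (abs_nonneg _) _
      · have : 2 * (r + 1) ≤ wordDist S 1 y := by
          by_contra hcon
          exact h ((H.mem_ball _ _).2 (by omega))
        rw [psi_one S r y this, one_mul]
    refine h1.trans ((energy_le_K H K hp _ wm).trans ?_)
    refine mul_le_mul_of_nonneg_left ?_ hK
    exact Real.rpow_le_rpow (tsum_nonneg (gradSq_nonneg S _)) wT hp0.le
  have tT : Tendsto (fun n => H.T r ε (∑' x, gradSq S (u n) x) (u n)) atTop (𝓝 (H.T r ε A v)) := by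
    unfold Geo.T
    refine Tendsto.add (Tendsto.const_mul _ (hA.sub (tendsto_finsetSum _ (fun x _ => ?_))))
      (Tendsto.const_mul _ (Tendsto.const_mul _ (tendsto_finsetSum _ (fun x _ => (hl x).pow 2))))
    exact tendsto_finsetSum _ (fun s _ => ((hl (x * s)).sub (hl x)).pow 2)
  have t1 : Tendsto (fun n => ∑ x ∈ Q, conv R (fun y => |u n y| ^ p) x * |u n x| ^ p) atTop
      (𝓝 (∑ x ∈ Q, conv R (fun y => |v y| ^ p) x * |v x| ^ p)) :=
    tendsto_finsetSum _ (fun x _ => ((K.conv_lim H hfB hfl x).2.2).mul (hfl x))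
  have t2 : Tendsto (fun n => ∑ x ∈ Q, conv R (g n) x * |u n x| ^ p) atTop
      (𝓝 (∑ x ∈ Q, conv R g' x * |v x| ^ p)) :=
    tendsto_finsetSum _ (fun x _ =>
      ((K.conv_lim H (fun n => (hs n).1) hgl x).2.2).mul (hfl x))
  have fin := le_of_tendsto_of_tendsto' hE
    (((tT.rpow_const (Or.inr hp0.le)).const_mul (bestK S N R p)).add (t1.add t2)) ineq
  have e2 : energy R p v = _ := hs'.2
  have e3 : 0 ≤ ∑' x, conv R g' x * g' x :=
    tsum_nonneg (fun x => mul_nonneg (K.conv_nonneg hs'.1.nn x) (hs'.1.nn x))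
  rw [e2]
  linarith

lemma nu_le [Group G] {S : Finset G} {N : ℕ} {C₁ C₂ : ℝ} (H : Geo S N C₁ C₂)
    {α c₂ p : ℝ} {R : G → G → ℝ} (K : Ker S N α c₂ R) (hp : ((N : ℝ) + α) / ((N : ℝ) - 2) ≤ p)
    (u : ℕ → G → ℝ) (D : ℝ) (hu : ∀ n, MemD12 S N (u n))
    (hD : ∀ n, ∑' x, gradSq S (u n) x ≤ D) (v : G → ℝ) (hv : MemD12 S N v)
    (hl : ∀ x, Tendsto (fun n => u n x) atTop (𝓝 (v x))) (A E : ℝ)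
    (hA : Tendsto (fun n => ∑' x, gradSq S (u n) x) atTop (𝓝 A))
    (hE : Tendsto (fun n => energy R p (u n)) atTop (𝓝 E)) :
    E - energy R p v ≤ bestK S N R p * (A - ∑' x, gradSq S v x) ^ p := by
  have hN3 : (3 : ℝ) ≤ N := by exact_mod_cast H.hN
  have hN2 : (0 : ℝ) < (N : ℝ) - 2 := by linarith
  have hα := K.hα
  have hp0 : 0 < p := lt_of_lt_of_le (by positivity) hp
  have step : ∀ ε : ℝ, 0 < ε → E - energy R p v ≤
      bestK S N R p * ((1 + ε) * (A - ∑' x, gradSq S v x)) ^ p := by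
    intro ε hε
    have tT : Tendsto (fun r => H.T r ε A v) atTop (𝓝 ((1 + ε) * (A - ∑' x, gradSq S v x))) := by
      unfold Geo.T
      have := (((H.ball_sum _ hv.2).const_sub A).const_mul (1 + ε)).add
        ((H.an_lim v hv.1).const_mul ((1 + 1 / ε) * S.card))
      rwa [mul_zero, add_zero] at this
    exact ge_of_tendsto' ((tT.rpow_const (Or.inr hp0.le)).const_mul (bestK S N R p))
      (fun r => nu_le_fin H K hp u D hu hD v hl A E hA hE r ε hε)
  have t : Tendsto (fun n : ℕ => bestK S N R p *
      ((1 + 1 / ((n : ℝ) + 1)) * (A - ∑' x, gradSq S v x)) ^ p) atTop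
      (𝓝 (bestK S N R p * ((1 + 0) * (A - ∑' x, gradSq S v x)) ^ p)) :=
    (((tendsto_one_div_add_atTop_nhds_zero_nat.const_add 1).mul_const _).rpow_const
      (Or.inr hp0.le)).const_mul _
  rw [add_zero, one_mul] at t
  exact ge_of_tendsto' t (fun n => step _ (by positivity))

lemma Geo.tail_tsum [Group G] {S : Finset G} {N : ℕ} {C₁ C₂ : ℝ} (H : Geo S N C₁ C₂)
    (k : G → ℝ) (hk : Summable k) (r : ℕ) :
    ∑' x : {z : G // r < wordDist S 1 z}, k x = ∑' x, k x - ∑ x ∈ H.ball r, k x := by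
  have h := hk.sum_add_tsum_subtype_compl (H.ball r)
  have e : ∑' x : {z : G // r < wordDist S 1 z}, k x = ∑' x : {z : G // z ∉ H.ball r}, k x := by
    have hz : ∀ z : G, r < wordDist S 1 z ↔ z ∉ H.ball r := fun z => by
      rw [H.mem_ball, not_le]
    exact (Equiv.subtypeEquivRight hz).tsum_eq (fun x : {z : G // z ∉ H.ball r} => k x)
  rw [e]
  linarith

lemma subseq_exists [Countable G] (u : ℕ → G → ℝ) (b : ℝ) (hb : ∀ n x, |u n x| ≤ b)
    (d e : ℕ → ℝ) (m₁ m₂ : ℝ) (hd : ∀ n, |d n| ≤ m₁) (he : ∀ n, |e n| ≤ m₂) :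
    ∃ φ : ℕ → ℕ, StrictMono φ ∧ ∃ (v : G → ℝ) (A E : ℝ),
      (∀ x, Tendsto (fun n => u (φ n) x) atTop (𝓝 (v x))) ∧
      Tendsto (fun n => d (φ n)) atTop (𝓝 A) ∧ Tendsto (fun n => e (φ n)) atTop (𝓝 E) := by
  have hc : IsCompact ((Set.pi Set.univ (fun _ : G => Set.Icc (-b) b)) ×ˢ
      (Set.Icc (-m₁) m₁ ×ˢ Set.Icc (-m₂) m₂)) :=
    (isCompact_univ_pi (fun _ => isCompact_Icc)).prod (isCompact_Icc.prod isCompact_Icc)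
  obtain ⟨⟨v, A, E⟩, -, φ, hφ, hlim⟩ := hc.tendsto_subseq (x := fun n => (u n, d n, e n)) (by
    intro n
    exact ⟨fun x _ => abs_le.1 (hb n x), abs_le.1 (hd n), abs_le.1 (he n)⟩)
  refine ⟨φ, hφ, v, A, E, fun x => ?_, ?_, ?_⟩
  · exact ((continuous_apply x).comp continuous_fst).continuousAt.tendsto.comp hlim
  · exact (continuous_fst.comp continuous_snd).continuousAt.tendsto.comp hlim
  · exact (continuous_snd.comp continuous_snd).continuousAt.tendsto.comp hlim

lemma main_aux [Group G] [Countable G] {S : Finset G} {N : ℕ} {C₁ C₂ : ℝ} (H : Geo S N C₁ C₂)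
    {α c₂ p : ℝ} {Rα : G → G → ℝ} (K : Ker S N α c₂ Rα)
    (hp : ((N : ℝ) + α) / ((N : ℝ) - 2) ≤ p) (u : ℕ → G → ℝ)
    (hbdd : ∃ M : ℝ, ∀ n, MemD12 S N (u n) ∧ D12Norm S (u n) ≤ M) :
    ∃ φ : ℕ → ℕ, StrictMono φ ∧ ∃ v : G → ℝ, MemD12 S N v ∧
      (∀ x : G, Tendsto (fun n => u (φ n) x) atTop (𝓝 (v x))) ∧
      ∃ L M : ℕ → ℝ,
        (∀ r : ℕ, 1 ≤ r →
          Tendsto (fun n => ∑' x : {z : G // r < wordDist S 1 z}, gradSq S (u (φ n)) (x : G))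
            atTop (𝓝 (L r)) ∧
          Tendsto (fun n => ∑' x : {z : G // r < wordDist S 1 z},
              conv Rα (fun y => |u (φ n) y| ^ p) (x : G) * |u (φ n) (x : G)| ^ p)
            atTop (𝓝 (M r))) ∧
        ∃ μinf νinf : ℝ, Tendsto L atTop (𝓝 μinf) ∧ Tendsto M atTop (𝓝 νinf) ∧
          νinf ≤ bestK S N Rα p * μinf ^ p ∧
          Tendsto (fun n => D12Norm S (u (φ n)) ^ 2) atTop (𝓝 (D12Norm S v ^ 2 + μinf)) ∧
          Tendsto (fun n => energy Rα p (u (φ n))) atTop (𝓝 (energy Rα p v + νinf)) := by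
  obtain ⟨M, hM⟩ := hbdd
  have hN3 : (3 : ℝ) ≤ N := by exact_mod_cast H.hN
  have hN2 : (0 : ℝ) < (N : ℝ) - 2 := by linarith
  have hα := K.hα
  have hp0 : 0 < p := lt_of_lt_of_le (by positivity) hp
  have hr := rr_pos K.hα K.hαN
  have hu0 : ∀ n, MemD12 S N (u n) := fun n => (hM n).1
  have hD0 : ∀ n, ∑' x, gradSq S (u n) x ≤ M ^ 2 := fun n => by
    rw [← D12Norm_sq]
    exact pow_le_pow_left₀ (Real.rpow_nonneg (tsum_nonneg (gradSq_nonneg S _)) _) (hM n).2 2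
  obtain ⟨B, hBd⟩ : ∃ B, B = bB N C₁ p (M ^ 2) := ⟨_, rfl⟩
  have hfB0 : ∀ n, Bd N α B (fun y => |u n y| ^ p) := fun n => by
    rw [hBd]; exact H.bd K.hα K.hαN hp (hu0 n) (hD0 n)
  obtain ⟨q, hq⟩ : ∃ q, q = 2 * (N : ℝ) / ((N : ℝ) - 2) := ⟨_, rfl⟩
  have hq0 : 0 < q := by rw [hq]; positivity
  obtain ⟨X, hX⟩ : ∃ X, X = sobC N C₁ * (M ^ 2) ^ ((N : ℝ) / ((N : ℝ) - 2)) := ⟨_, rfl⟩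
  have hpt : ∀ n (F : Finset G), ∑ x ∈ F, |u n x| ^ q ≤ X := fun n F => by
    rw [hq, hX]; exact H.pt_bd (hu0 n) (hD0 n) F
  have hE0 : ∀ n, 0 ≤ energy Rα p (u n) := fun n =>
    tsum_nonneg (fun x => mul_nonneg (K.conv_nonneg (hfB0 n).nn x) ((hfB0 n).nn x))
  obtain ⟨φ, hφ, v, A, E, hl, hA, hE⟩ := subseq_exists u (X ^ (1 / q)) (by
      intro n x
      have h1 : |u n x| ^ q ≤ X := by simpa using hpt n {x}
      have h2 := Real.rpow_le_rpow (Real.rpow_nonneg (abs_nonneg _) _) h1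
        (z := 1 / q) (by positivity)
      rwa [← Real.rpow_mul (abs_nonneg _), mul_one_div_cancel hq0.ne', Real.rpow_one] at h2)
    (fun n => ∑' x, gradSq S (u n) x) (fun n => energy Rα p (u n)) (M ^ 2)
    (2 * cH N C₂ α c₂ * B ^ 2)
    (fun n => by rw [abs_of_nonneg (tsum_nonneg (gradSq_nonneg S _))]; exact hD0 n)
    (fun n => by rw [abs_of_nonneg (hE0 n)]; exact (K.energy_bd H (hfB0 n)).2)
  have hgl : ∀ x, Tendsto (fun n => gradSq S (u (φ n)) x) atTop (𝓝 (gradSq S v x)) := fun x =>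
    tendsto_finsetSum _ (fun s _ => ((hl (x * s)).sub (hl x)).pow 2)
  have hv : MemD12 S N v := by
    constructor
    · refine summable_of_sum_le (c := X) (fun x => Real.rpow_nonneg (abs_nonneg _) _) (fun F => ?_)
      rw [← hq]
      have t : Tendsto (fun n => ∑ x ∈ F, |u (φ n) x| ^ q) atTop (𝓝 (∑ x ∈ F, |v x| ^ q)) :=
        tendsto_finsetSum _ (fun x _ => (hl x).abs.rpow_const (Or.inr hq0.le))
      exact le_of_tendsto' t (fun n => hpt (φ n) F)
    · refine summable_of_sum_le (c := M ^ 2) (gradSq_nonneg S v) (fun F => ?_)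
      have t : Tendsto (fun n => ∑ x ∈ F, gradSq S (u (φ n)) x) atTop
          (𝓝 (∑ x ∈ F, gradSq S v x)) := tendsto_finsetSum _ (fun x _ => hgl x)
      exact le_of_tendsto' t (fun n =>
        ((hu0 (φ n)).2.sum_le_tsum F (fun x _ => gradSq_nonneg S _ x)).trans (hD0 (φ n)))
  have hfl : ∀ y, Tendsto (fun n => |u (φ n) y| ^ p) atTop (𝓝 (|v y| ^ p)) := fun y =>
    ((hl y).abs).rpow_const (Or.inr hp0.le)
  have hvB : Bd N α B (fun y => |v y| ^ p) := Bd.lim hr (fun n => hfB0 (φ n)) hfl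
  have hcl : ∀ x, Tendsto (fun n => conv Rα (fun y => |u (φ n) y| ^ p) x * |u (φ n) x| ^ p) atTop
      (𝓝 (conv Rα (fun y => |v y| ^ p) x * |v x| ^ p)) := fun x =>
    ((K.conv_lim H (fun n => hfB0 (φ n)) hfl x).2.2).mul (hfl x)
  refine ⟨φ, hφ, v, hv, hl, fun r => A - ∑ x ∈ H.ball r, gradSq S v x,
    fun r => E - ∑ x ∈ H.ball r, conv Rα (fun y => |v y| ^ p) x * |v x| ^ p, ?_,
    A - ∑' x, gradSq S v x, E - energy Rα p v, ?_, ?_, ?_, ?_, ?_⟩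
  · intro r _
    constructor
    · have e : ∀ n, ∑' x : {z : G // r < wordDist S 1 z}, gradSq S (u (φ n)) (x : G) =
          ∑' x, gradSq S (u (φ n)) x - ∑ x ∈ H.ball r, gradSq S (u (φ n)) x := fun n =>
        H.tail_tsum _ (hu0 (φ n)).2 r
      simp only [e]
      exact hA.sub (tendsto_finsetSum _ (fun x _ => hgl x))
    · have e : ∀ n, ∑' x : {z : G // r < wordDist S 1 z},
          conv Rα (fun y => |u (φ n) y| ^ p) (x : G) * |u (φ n) (x : G)| ^ p =
          energy Rα p (u (φ n)) -
            ∑ x ∈ H.ball r, conv Rα (fun y => |u (φ n) y| ^ p) x * |u (φ n) x| ^ p := fun n =>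
        H.tail_tsum (fun x => conv Rα (fun y => |u (φ n) y| ^ p) x * |u (φ n) x| ^ p)
          (K.energy_bd H (hfB0 (φ n))).1 r
      simp only [e]
      exact hE.sub (tendsto_finsetSum _ (fun x _ => hcl x))
  · exact (H.ball_sum _ hv.2).const_sub A
  · exact (H.ball_sum _ (K.energy_bd H hvB).1).const_sub E
  · exact nu_le H K hp (fun n => u (φ n)) (M ^ 2) (fun n => hu0 _) (fun n => hD0 _) v hv hl A E
      hA hE
  · simp only [D12Norm_sq]
    rw [add_sub_cancel]
    exact hA
  · rw [add_sub_cancel]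
    exact hE


theorem concentration_compactness_mass_at_infinity
    [Group G] [Countable G]
    (S : Finset G) (hS_gen : Subgroup.closure (S : Set G) = ⊤)
    (hS_sym : ∀ s ∈ S, s⁻¹ ∈ S) (hS_e : (1 : G) ∉ S)
    (N : ℕ) (hN : 3 ≤ N)
    (C₁ C₂ : ℝ) (hC₁ : 0 < C₁) (hC₂ : 0 < C₂)
    (hgrowth : ∀ n : ℕ, 1 ≤ n →
      C₁ * (n : ℝ) ^ N ≤ (Nat.card {x : G // wordDist S 1 x ≤ n} : ℝ) ∧
      (Nat.card {x : G // wordDist S 1 x ≤ n} : ℝ) ≤ C₂ * (n : ℝ) ^ N)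
    (α : ℝ) (hα : 0 < α) (hαN : α < N)
    (Rα : G → G → ℝ) (hR_nonneg : ∀ x y, 0 ≤ Rα x y)
    (hR_symm : ∀ x y, Rα x y = Rα y x)
    (c₁ c₂ : ℝ) (hc₁ : 0 < c₁) (hc₂ : 0 < c₂)
    (hR_low : ∀ x y : G, x ≠ y → c₁ * (wordDist S x y : ℝ) ^ (α - (N : ℝ)) ≤ Rα x y)
    (hR_up : ∀ x y : G, x ≠ y → Rα x y ≤ c₂ * (wordDist S x y : ℝ) ^ (α - (N : ℝ)))
    (hR_diag : ∀ x : G, Rα x x ≤ c₂)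
    (p : ℝ) (hp : ((N : ℝ) + α) / ((N : ℝ) - 2) ≤ p)
    (u : ℕ → G → ℝ)
    (hbdd : ∃ M : ℝ, ∀ n, MemD12 S N (u n) ∧ D12Norm S (u n) ≤ M) :
    ∃ φ : ℕ → ℕ, StrictMono φ ∧ ∃ v : G → ℝ, MemD12 S N v ∧
      (∀ x : G, Tendsto (fun n => u (φ n) x) atTop (𝓝 (v x))) ∧
      ∃ L M : ℕ → ℝ,
        (∀ r : ℕ, 1 ≤ r →
          Tendsto (fun n => ∑' x : {z : G // r < wordDist S 1 z}, gradSq S (u (φ n)) (x : G))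
            atTop (𝓝 (L r)) ∧
          Tendsto (fun n => ∑' x : {z : G // r < wordDist S 1 z},
              conv Rα (fun y => |u (φ n) y| ^ p) (x : G) * |u (φ n) (x : G)| ^ p)
            atTop (𝓝 (M r))) ∧
        ∃ μinf νinf : ℝ, Tendsto L atTop (𝓝 μinf) ∧ Tendsto M atTop (𝓝 νinf) ∧
          νinf ≤ bestK S N Rα p * μinf ^ p ∧
          Tendsto (fun n => D12Norm S (u (φ n)) ^ 2) atTop (𝓝 (D12Norm S v ^ 2 + μinf)) ∧
          Tendsto (fun n => energy Rα p (u (φ n))) atTop (𝓝 (energy Rα p v + νinf)) := by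
  exact main_aux (C₁ := C₁) (C₂ := C₂) (α := α) (c₂ := c₂)
    ⟨hS_gen, hS_sym, hN, hC₁, hC₂, hgrowth⟩
    ⟨hα, hαN, hc₂, hR_nonneg, hR_symm, hR_up, hR_diag⟩ hp u hbdd

end Choquard
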